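/- arXiv:1711.09399 — 2 statements merged into one kernel-verified Lean document; each statement's English description precedes it below -/
import Mathlib

section
/- Let a₁, a₂, a₃ be nonzero integers and b₁, b₂, b₃ integers with gcd(a_j, b_j) = 1 for j = 1,2,3. Let P be the group with presentation ⟨x₁, x₂, x₃, h | x_j h x_j^{−1} h^{−1} (j=1,2,3), x_j^{a_j} h^{b_j} (j=1,2,3), x₁x₂x₃⟩. Let p be a prime, m ≥ 1, n a positive integer dividing p − 1, r ∈ (ℤ/p^mℤ)^× of multiplicative order exactly n, and G = ℤ/p^mℤ ⋊_r ℤ/nℤ. Define (indices j taken mod 3): f ≥ 0 by p^f = gcd(lcm(a₁,a₂,a₃), p^m); integers c_j with c_j·a_j ≡ gcd(a_j, p^m) (mod p^m); B = Σ_{j=1}^{3} b_j·c_j·p^f/gcd(a_j, p^m); D' = gcd(lcm(a₁,a₂,a₃), n); integers c'_j with c'_j·a_j ≡ gcd(a_j, n) (mod n); B' = Σ_{j=1}^{3} b_j·c'_j·D'/gcd(a_j, n); E = n / lcm(D', n/gcd(n, B')); κ₂ = 2 − Σ_{j=1}^{3} gcd(a_{j+1}, a_{j−1}, n) + (1/D')·Π_{j=1}^{3}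 gcd(a_j, n); κ₁ = Σ_{j=1}^{3} gcd(a_j, p^m)·(gcd(a_{j+1}, a_{j−1}, n) − 1) + ((E−1)/D')·Π_{j=1}^{3} gcd(a_j, n); and μ = Σ_{j=1}^{3} ‖a_j‖_p − f + min{m − f, ‖B‖_p} if f < m, while μ = Σ_{j=1}^{3} min{‖a_j‖_p, m} − m if f = m. Then the number of group homomorphisms from P to G equals κ₂·p^{2m} + κ₁·p^m + p^μ. -/
open Multiplicative

/-- The standard presentation `⟨x₁, x₂, x₃, h | x_j h x_j⁻¹ h⁻¹, x_j^{a_j} h^{b_j} (j = 1,2,3),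
x₁x₂x₃⟩` of the fundamental group of the small Seifert fibred space
`S²(a₁/b₁, a₂/b₂, a₃/b₃)`.  The generator `x_j` is `FreeGroup.of j` for `j = 0,1,2` and
`h` is `FreeGroup.of 3`. -/
def seifertRels (a b : Fin 3 → ℤ) : Set (FreeGroup (Fin 4)) :=
  (⋃ j : Fin 3,
      {FreeGroup.of j.castSucc * FreeGroup.of 3 * (FreeGroup.of j.castSucc)⁻¹ *
        (FreeGroup.of 3)⁻¹})
    ∪ (⋃ j : Fin 3, {FreeGroup.of j.castSucc ^ a j * FreeGroup.of 3 ^ b j})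
    ∪ {FreeGroup.of 0 * FreeGroup.of 1 * FreeGroup.of 2}


/-!
Let `G = N ⋊ Q` with `N`, `Q` finite abelian and every `q ≠ 1` acting on `N` without nontrivial
fixed points. Composition with the projection sends `Hom(P, G)` to `Hom(P, Q)`, and the fibre over
`σ` depends only on where `σ` is trivial.

* If `σ(h) ≠ 1`, then the centralizer of any lift of `σ(h)` is an `N`-conjugate of `Q`. As `h` is
  central, a lift of `σ` takes its values in this conjugate, and there are `|N|` lifts.
* If `σ(h) = 1` and `σ ≠ 1`, then a lift kills `h`, for its value at `h` lies in `N` and commutes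
  with an element that moves it. The relation `x_j^{a_j} = 1` constrains the `N`-component of the
  image of `x_j` only if `σ(x_j) = 1`, which happens for at most one `j`. The relation
  `x₁x₂x₃ = 1` divides the number of choices by `|N|`.
* The lifts of `σ = 1` are the elements of `Hom(P, N)`.

It remains to count homomorphisms to a cyclic group `A` of order `k`. Those with `h ↦ 1` are the
triples `y_j` of `a_j`-torsion elements with product `1`. The possible images of `h` are `u^D`
with `D = gcd(lcm(a₁, a₂, a₃), k)` and `u^{DB} = 1`, which form a group of order `gcd(B, k / D)`.
-/

/-! ### Torsion subgroups and subgroups of powers -/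

section CommGroup

variable {A : Type*} [CommGroup A]

variable (A) in
/-- The `x`-torsion subgroup `A[x]` of a commutative group, for an integer exponent `x`. -/
def zpowKer (x : ℤ) : Subgroup A := (zpowGroupHom x).ker

variable (A) in
/-- The subgroup of `x`-th powers of a commutative group, for an integer exponent `x`. -/
def zpowRange (x : ℤ) : Subgroup A := (zpowGroupHom x).range

@[simp]
lemma mem_zpowKer {x : ℤ} {z : A} : z ∈ zpowKer A x ↔ z ^ x = 1 := Iff.rfl

@[simp]
lemma mem_zpowRange {x : ℤ} {z : A} : z ∈ zpowRange A x ↔ ∃ w, w ^ x = z := Iff.rfl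

lemma zpowKer_le_of_dvd {x y : ℤ} (h : x ∣ y) : zpowKer A x ≤ zpowKer A y := by
  obtain ⟨q, rfl⟩ := h
  intro z hz
  rw [mem_zpowKer] at hz ⊢
  rw [zpow_mul, hz, one_zpow]

lemma zpowRange_le_of_dvd {x y : ℤ} (h : x ∣ y) : zpowRange A y ≤ zpowRange A x := by
  obtain ⟨q, rfl⟩ := h
  rintro _ ⟨w, rfl⟩
  exact ⟨w ^ q, (zpow_mul' w x q).symm⟩

lemma zpowKer_gcd (x y : ℤ) : zpowKer A (Int.gcd x y) = zpowKer A x ⊓ zpowKer A y := by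
  refine le_antisymm (le_inf (zpowKer_le_of_dvd (Int.gcd_dvd_left x y))
    (zpowKer_le_of_dvd (Int.gcd_dvd_right x y))) ?_
  rintro z ⟨hx : z ^ x = 1, hy : z ^ y = 1⟩
  rw [mem_zpowKer, Int.gcd_eq_gcd_ab, zpow_add, zpow_mul, zpow_mul, hx, hy, one_zpow, one_zpow,
    one_mul]

lemma exists_isCoprime_mul_eq_mul (x y : ℤ) :
    ∃ x' y' : ℤ, IsCoprime x' y' ∧ x * y' = y * x' := by
  rcases (Int.gcd x y).eq_zero_or_pos with h | h
  · obtain ⟨rfl, rfl⟩ := Int.gcd_eq_zero_iff.mp h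
    exact ⟨0, 1, isCoprime_one_right, by simp⟩
  · obtain ⟨x', y', hcop, hx, hy⟩ := Int.exists_gcd_one h
    refine ⟨x', y', Int.isCoprime_iff_gcd_eq_one.mpr hcop, ?_⟩
    linear_combination y' * hx - x' * hy

lemma zpowKer_lcm (x y : ℤ) : zpowKer A (Int.lcm x y) = zpowKer A x ⊔ zpowKer A y := by
  refine le_antisymm (fun z hz => ?_) (sup_le (zpowKer_le_of_dvd (Int.dvd_lcm_left x y))
    (zpowKer_le_of_dvd (Int.dvd_lcm_right x y)))
  obtain ⟨x', y', ⟨u, v, huv⟩, hxy⟩ := exists_isCoprime_mul_eq_mul x y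
  have hdvd : (Int.lcm x y : ℤ) ∣ x * y' :=
    Int.coe_lcm_dvd (dvd_mul_right x y') (hxy ▸ dvd_mul_right y x')
  have hz' : z ^ (x * y') = 1 := zpowKer_le_of_dvd hdvd hz
  refine Subgroup.mem_sup.mpr ⟨z ^ (v * y'), ?_, z ^ (u * x'), ?_, ?_⟩
  · rw [mem_zpowKer, ← zpow_mul, show v * y' * x = x * y' * v by ring, zpow_mul, hz', one_zpow]
  · rw [mem_zpowKer, ← zpow_mul, show u * x' * y = x * y' * u by linear_combination -u * hxy,
      zpow_mul, hz', one_zpow]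
  · rw [← zpow_add, add_comm, huv, zpow_one]

lemma zpowRange_lcm (x y : ℤ) : zpowRange A (Int.lcm x y) = zpowRange A x ⊓ zpowRange A y := by
  refine le_antisymm (le_inf (zpowRange_le_of_dvd (Int.dvd_lcm_left x y))
    (zpowRange_le_of_dvd (Int.dvd_lcm_right x y))) ?_
  rintro z ⟨⟨w₁, hw₁⟩, ⟨w₂, hw₂⟩⟩
  rw [zpowGroupHom_apply] at hw₁ hw₂
  obtain ⟨x', y', ⟨u, v, huv⟩, hxy⟩ := exists_isCoprime_mul_eq_mul x y
  have hdvd : (Int.lcm x y : ℤ) ∣ x * y' :=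
    Int.coe_lcm_dvd (dvd_mul_right x y') (hxy ▸ dvd_mul_right y x')
  refine zpowRange_le_of_dvd hdvd ⟨w₁ ^ v * w₂ ^ u, ?_⟩
  calc (w₁ ^ v * w₂ ^ u) ^ (x * y')
      = (w₁ ^ x) ^ (v * y') * (w₂ ^ y) ^ (u * x') := by
        rw [mul_zpow, ← zpow_mul, ← zpow_mul, ← zpow_mul, ← zpow_mul]
        congr 2
        · ring
        · linear_combination u * hxy
    _ = z := by rw [hw₁, hw₂, ← zpow_add, add_comm, huv, zpow_one]

lemma zpowKer_gcd_natCard (x : ℤ) : zpowKer A (Int.gcd x (Nat.card A)) = zpowKer A x := by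
  rw [zpowKer_gcd, inf_eq_left]
  intro z _
  rw [mem_zpowKer, zpow_natCast, pow_card_eq_one']

lemma natCard_zpowKer [IsCyclic A] [Finite A] (x : ℤ) :
    Nat.card (zpowKer A x) = Int.gcd x (Nat.card A) := by
  have hx : zpowKer A x = (powMonoidHom x.natAbs : A →* A).ker := by
    ext z
    rw [mem_zpowKer, MonoidHom.mem_ker, powMonoidHom_apply, pow_natAbs_eq_one]
  rw [hx, IsCyclic.card_powMonoidHom_ker, Nat.gcd_comm]
  rfl

lemma natCard_zpowRange [IsCyclic A] [Finite A] {d : ℕ} (hd : d ∣ Nat.card A) :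
    Nat.card (zpowRange A d) = Nat.card A / d := by
  have hrange : zpowRange A d = (powMonoidHom d : A →* A).range := by
    ext z
    simp [MonoidHom.mem_range]
  rw [hrange, IsCyclic.card_powMonoidHom_range, Nat.gcd_eq_right hd]

lemma natCard_zpowRange_inf_zpowKer [IsCyclic A] [Finite A] {d : ℕ} (hd : d ∣ Nat.card A)
    (x : ℤ) :
    Nat.card ↥(zpowRange A d ⊓ zpowKer A x) = Int.gcd x (Nat.card A / d : ℕ) := by
  have hsub : (zpowKer A x).subgroupOf (zpowRange A d) = zpowKer (zpowRange A d) x := by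
    ext z
    simp [Subgroup.mem_subgroupOf, Subtype.ext_iff]
  rw [← natCard_zpowRange hd, ← natCard_zpowKer, ← hsub, inf_comm,
    ← Subgroup.inf_subgroupOf_right]
  exact (Nat.card_congr (Subgroup.subgroupOfEquivOfLe inf_le_right).toEquiv).symm

end CommGroup

/-- The subgroup generated by the images of the `K j` is the image of `∏ K j`, and the solution
set on the left is the kernel of that map. -/
lemma natCard_prod_eq_one_mul_natCard_iSup_map {ι A B : Type*} [Fintype ι] [CommGroup A] [Group B]
    (K : ι → Subgroup B) (f : ι → B →* A) :
    Nat.card {u : ι → B // (∀ j, u j ∈ K j) ∧ ∏ j, f j (u j) = 1} *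
      Nat.card ↥(⨆ j, (K j).map (f j)) = ∏ j, Nat.card (K j) := by
  let F : (∀ j, K j) →* A :=
    MonoidHom.noncommPiCoprod (fun j => (f j).domRestrict (K j)) fun _ _ _ _ _ => Commute.all _ _
  have hF (u : ∀ j, K j) : F u = ∏ j, f j (u j) := Finset.noncommProd_eq_prod _ _
  have hrange : F.range = ⨆ j, (K j).map (f j) :=
    (MonoidHom.noncommPiCoprod_range _).trans
      (iSup_congr fun j => MonoidHom.domRestrict_range (K j) (f j))
  rw [← Nat.card_pi, ← F.ker.card_mul_index, Subgroup.index_ker, hrange]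
  congr 1
  refine Nat.card_congr ((Equiv.subtypeSubtypeEquivSubtypeInter _ _).symm.trans
    (Equiv.subtypeEquiv Equiv.subtypePiEquivPi fun u => ?_))
  rw [MonoidHom.mem_ker, hF]
  rfl

/-! ### The group `P` -/

/-- The group `P` with the standard presentation of the fundamental group of the small Seifert
fibred space `S²(a₁/b₁, a₂/b₂, a₃/b₃)`. -/
abbrev SeifertGroup (a b : Fin 3 → ℤ) : Type := PresentedGroup (seifertRels a b)

section Tuples

variable {G : Type*} [Group G]

/-- `x₁, x₂, x₃` and `h` satisfy the defining relations of `P`, so that they are the images of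
the generators under a homomorphism out of `P`. -/
structure IsSeifertTuple (a b : Fin 3 → ℤ) (x : Fin 3 → G) (h : G) : Prop where
  commute (j : Fin 3) : Commute (x j) h
  zpow_mul_zpow (j : Fin 3) : x j ^ a j * h ^ b j = 1
  prod : x 0 * x 1 * x 2 = 1

/-- `x₁, x₂, x₃` satisfy the defining relations of the triangle group
`⟨x₁, x₂, x₃ | x₁^{a₁}, x₂^{a₂}, x₃^{a₃}, x₁x₂x₃⟩`, the quotient of `P` by the fibre. -/
structure IsTriangleTuple (a : Fin 3 → ℤ) (x : Fin 3 → G) : Prop where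
  zpow_eq_one (j : Fin 3) : x j ^ a j = 1
  prod : x 0 * x 1 * x 2 = 1

lemma isSeifertTuple_one_iff {a b : Fin 3 → ℤ} {x : Fin 3 → G} :
    IsSeifertTuple a b x 1 ↔ IsTriangleTuple a x where
  mp hx := ⟨fun j => by simpa using hx.zpow_mul_zpow j, hx.prod⟩
  mpr hx := ⟨fun j => Commute.one_right _, fun j => by simpa using hx.zpow_eq_one j, hx.prod⟩

lemma forall_seifertRels_eq_one_iff {a b : Fin 3 → ℤ} (f : FreeGroup (Fin 4) →* G) :
    (∀ y ∈ seifertRels a b, f y = 1) ↔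
      IsSeifertTuple a b (fun j => f (FreeGroup.of j.castSucc)) (f (FreeGroup.of 3)) := by
  simp only [seifertRels, Set.mem_union, Set.mem_iUnion, Set.mem_singleton_iff, or_imp,
    forall_and, forall_exists_index, forall_eq_apply_imp_iff, forall_eq, map_mul, map_inv, map_zpow]
  refine ⟨fun h => ⟨fun j => ?_, h.1.2, h.2⟩, fun h => ⟨⟨fun j => ?_, h.zpow_mul_zpow⟩, h.prod⟩⟩
  · exact mul_inv_eq_iff_eq_mul.mp (mul_inv_eq_one.mp (h.1.1 j))
  · rw [mul_inv_eq_one, mul_inv_eq_iff_eq_mul, (h.commute j).eq]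

end Tuples

namespace SeifertGroup

variable {a b : Fin 3 → ℤ} {G : Type*} [Group G]

/-- The generator `x_j` of `P`. -/
def x (j : Fin 3) : SeifertGroup a b := PresentedGroup.of j.castSucc

/-- The generator `h` of `P`, the class of a regular fibre. -/
def fibre : SeifertGroup a b := PresentedGroup.of 3

lemma isSeifertTuple_comp (σ : SeifertGroup a b →* G) :
    IsSeifertTuple a b (fun j => σ (x j)) (σ fibre) :=
  (forall_seifertRels_eq_one_iff (σ.comp (PresentedGroup.mk _))).mp fun y hy => by
    rw [MonoidHom.comp_apply, PresentedGroup.one_of_mem hy, map_one]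

/-- The homomorphism out of `P` with prescribed images of the generators. -/
def lift {y : Fin 3 → G} {h : G} (hy : IsSeifertTuple a b y h) : SeifertGroup a b →* G :=
  PresentedGroup.toGroup (f := Fin.snoc y h) <| by
    rw [forall_seifertRels_eq_one_iff]
    simp only [FreeGroup.lift_apply_of, Fin.snoc_castSucc]
    exact hy

@[simp]
lemma lift_x {y : Fin 3 → G} {h : G} (hy : IsSeifertTuple a b y h) (j : Fin 3) :
    lift hy (x j) = y j := by
  simp [lift, x]

@[simp]
lemma lift_fibre {y : Fin 3 → G} {h : G} (hy : IsSeifertTuple a b y h) :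
    lift hy fibre = h :=
  (PresentedGroup.toGroup.of _).trans (Fin.snoc_last (α := fun _ => G) h y)

lemma hom_ext {σ τ : SeifertGroup a b →* G} (hx : ∀ j, σ (x j) = τ (x j))
    (hfibre : σ fibre = τ fibre) : σ = τ :=
  PresentedGroup.ext fun i => i.lastCases hfibre hx

instance [Finite G] : Finite (SeifertGroup a b →* G) :=
  Finite.of_injective (fun σ => (fun j => σ (x j), σ fibre)) fun _ _ h =>
    hom_ext (congrFun (Prod.ext_iff.mp h).1) (Prod.ext_iff.mp h).2

lemma fibre_mem_center : (fibre : SeifertGroup a b) ∈ Subgroup.center (SeifertGroup a b) := by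
  rw [← Subgroup.centralizer_univ, ← Subgroup.coe_top,
    ← PresentedGroup.closure_range_of (seifertRels a b), Subgroup.centralizer_closure,
    Subgroup.mem_centralizer_iff]
  rintro _ ⟨i, rfl⟩
  refine i.lastCases rfl fun j => ?_
  exact (isSeifertTuple_comp (MonoidHom.id _)).commute j

lemma natCard_hom_fibre_eq_one (p : (Fin 3 → G) → Prop) :
    Nat.card {σ : SeifertGroup a b →* G // σ fibre = 1 ∧ p fun j => σ (x j)} =
      Nat.card {y : Fin 3 → G // IsTriangleTuple a y ∧ p y} :=
  Nat.card_congr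
    { toFun σ := ⟨fun j => σ.1 (x j),
        isSeifertTuple_one_iff.mp (σ.2.1 ▸ isSeifertTuple_comp σ.1), σ.2.2⟩
      invFun y := ⟨lift (isSeifertTuple_one_iff.mpr y.2.1), by simp, by simpa using y.2.2⟩
      left_inv σ := Subtype.ext (hom_ext (by simp) (by simp [σ.2.1]))
      right_inv y := Subtype.ext (funext fun j => by simp) }

end SeifertGroup

/-! ### Homomorphisms from `P` to commutative groups -/

section CommGroup

variable {A : Type*} [CommGroup A] {a b : Fin 3 → ℤ}

/-- The least common multiple of `a₁, a₂, a₃`. -/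
abbrev tripleLcm (a : Fin 3 → ℤ) : ℕ := Int.lcm (a 0) (Int.lcm (a 1) (a 2))

lemma dvd_tripleLcm (a : Fin 3 → ℤ) (j : Fin 3) : a j ∣ tripleLcm a := by
  have h : (Int.lcm (a 1) (a 2) : ℤ) ∣ tripleLcm a := Int.dvd_lcm_right _ _
  fin_cases j
  · exact Int.dvd_lcm_left _ _
  · exact (Int.dvd_lcm_left _ _).trans h
  · exact (Int.dvd_lcm_right _ _).trans h

lemma iSup_zpowKer (a : Fin 3 → ℤ) : ⨆ j, zpowKer A (a j) = zpowKer A (tripleLcm a) := by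
  rw [iSup_fin_three, zpowKer_lcm, zpowKer_lcm, sup_assoc]

lemma exists_prod_eq_of_mem_zpowKer_tripleLcm {z : A} (hz : z ∈ zpowKer A (tripleLcm a)) :
    ∃ y : Fin 3 → A, (∀ j, y j ^ a j = 1) ∧ y 0 * y 1 * y 2 = z := by
  rw [← iSup_zpowKer, iSup_fin_three] at hz
  obtain ⟨_, hw, z₂, hz₂, rfl⟩ := Subgroup.mem_sup.mp hz
  obtain ⟨z₀, hz₀, z₁, hz₁, rfl⟩ := Subgroup.mem_sup.mp hw
  refine ⟨![z₀, z₁, z₂], fun j => ?_, rfl⟩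
  fin_cases j <;> assumption

lemma isTriangleTuple_iff_mem_zpowKer {y : Fin 3 → A} :
    IsTriangleTuple a y ↔ (∀ j, y j ∈ zpowKer A (a j)) ∧ ∏ j, y j = 1 := by
  rw [Fin.prod_univ_three]
  exact ⟨fun h => ⟨h.zpow_eq_one, h.prod⟩, fun h => ⟨h.1, h.2⟩⟩

lemma natCard_isTriangleTuple_mul (a : Fin 3 → ℤ) :
    Nat.card {y : Fin 3 → A // IsTriangleTuple a y} * Nat.card (zpowKer A (tripleLcm a)) =
      ∏ j, Nat.card (zpowKer A (a j)) := by
  rw [← natCard_prod_eq_one_mul_natCard_iSup_map _ fun _ => MonoidHom.id A]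
  simp only [Subgroup.map_id, iSup_zpowKer, MonoidHom.id_apply, isTriangleTuple_iff_mem_zpowKer]

lemma natCard_isTriangleTuple_and_eq_one (a : Fin 3 → ℤ) (j : Fin 3) :
    Nat.card {y : Fin 3 → A // IsTriangleTuple a y ∧ y j = 1} =
      Nat.card (zpowKer A (Int.gcd (a (j + 1)) (a (j - 1)))) := by
  have hcases : ∀ i, i = j ∨ i = j + 1 ∨ i = j - 1 := by decide +revert
  have hne : j - 1 ≠ j ∧ j - 1 ≠ j + 1 := by decide +revert
  have hinv {y : Fin 3 → A} (hy : y 0 * y 1 * y 2 = 1) (hj : y j = 1) :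
      y (j - 1) = (y (j + 1))⁻¹ := by
    rw [← mul_eq_one_iff_eq_inv, ← hy]
    fin_cases j <;> simp_all [mul_comm, show (-1 : Fin 3) = 2 from rfl]
  rw [zpowKer_gcd]
  refine Nat.card_congr
    { toFun y := ⟨y.1 (j + 1), y.2.1.zpow_eq_one _, ?_⟩
      invFun z := ⟨fun i => if i = j then 1 else if i = j + 1 then z else z⁻¹, ⟨?_, ?_⟩, ?_⟩
      left_inv y := ?_
      right_inv z := ?_ }
  · have h := y.2.1.zpow_eq_one (j - 1)
    rwa [hinv y.2.1.prod y.2.2, inv_zpow, inv_eq_one] at h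
  · obtain ⟨h₁, h₂⟩ := Subgroup.mem_inf.mp z.2
    rw [mem_zpowKer] at h₁ h₂
    intro i
    obtain rfl | rfl | rfl := hcases i <;> simp [hne, h₁, h₂]
  · fin_cases j <;> simp
  · simp
  · ext i
    obtain rfl | rfl | rfl := hcases i <;> simp [hne, y.2.2, hinv y.2.1.prod y.2.2]
  · simp

lemma prod_zpow_eq_zpow_sum {ι : Type*} (s : Finset ι) (f : ι → ℤ) (u : A) :
    ∏ j ∈ s, u ^ f j = u ^ ∑ j ∈ s, f j :=
  (map_prod (zpowersHom A u) (fun j => ofAdd (f j)) s).symm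

lemma zpow_eq_zpow_of_modEq_natCard {x y : ℤ} (h : x ≡ y [ZMOD Nat.card A]) (u : A) :
    u ^ x = u ^ y :=
  zpow_eq_zpow_iff_modEq.mpr (h.of_dvd (Int.natCast_dvd_natCast.mpr (orderOf_dvd_natCard u)))

namespace SeifertGroup

lemma natCard_hom_eq_mul_natCard_range_eval :
    Nat.card (SeifertGroup a b →* A) = Nat.card {y : Fin 3 → A // IsTriangleTuple a y} *
      Nat.card (MonoidHom.eval (N := A) (fibre : SeifertGroup a b)).range := by
  rw [← (MonoidHom.eval (N := A) (fibre : SeifertGroup a b)).ker.card_mul_index,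
    Subgroup.index_ker]
  congr 1
  simpa using natCard_hom_fibre_eq_one fun _ => True

/-- As `a j` is prime to `b j`, the relations make the image of the fibre an `a j`-th power. -/
lemma apply_fibre_mem_zpowRange (hab : ∀ j, IsCoprime (a j) (b j)) (σ : SeifertGroup a b →* A) :
    σ fibre ∈ zpowRange A (tripleLcm a) := by
  suffices h : ∀ j, σ fibre ∈ zpowRange A (a j) by
    rw [zpowRange_lcm, zpowRange_lcm]
    exact ⟨h 0, h 1, h 2⟩
  intro j
  obtain ⟨α, β, h⟩ := hab j
  refine ⟨σ fibre ^ α * σ (x j) ^ (-β), ?_⟩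
  have hrel := eq_inv_of_mul_eq_one_left ((isSeifertTuple_comp σ).zpow_mul_zpow j)
  calc (σ fibre ^ α * σ (x j) ^ (-β)) ^ a j
      = σ fibre ^ (α * a j) * (σ (x j) ^ a j) ^ (-β) := by
        rw [mul_zpow, ← zpow_mul, ← zpow_mul, ← zpow_mul, mul_comm (-β)]
    _ = σ fibre := by
        rw [hrel, inv_zpow', neg_neg, ← zpow_mul, ← zpow_add, mul_comm (b j), h, zpow_one]

lemma apply_fibre_zpow_sum_eq_one {e : Fin 3 → ℤ} {D : ℤ}
    (hD : zpowKer A (tripleLcm a) ≤ zpowKer A D) {σ : SeifertGroup a b →* A} {u : A}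
    (hu : u ^ D = σ fibre) (hpow : ∀ j, (u ^ e j) ^ a j = σ fibre ^ b j) :
    σ fibre ^ ∑ j, e j = 1 := by
  have htors (j : Fin 3) : (σ (x j) * u ^ e j) ^ D = 1 := by
    refine hD (zpowKer_le_of_dvd (dvd_tripleLcm a j) ?_)
    rw [mem_zpowKer, mul_zpow, hpow, (isSeifertTuple_comp σ).zpow_mul_zpow]
  calc σ fibre ^ ∑ j, e j = (∏ j, u ^ e j) ^ D := by
        rw [← hu, ← zpow_mul, mul_comm, zpow_mul, prod_zpow_eq_zpow_sum]
    _ = (∏ j, σ (x j) * u ^ e j) ^ D := by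
        rw [Finset.prod_mul_distrib, Fin.prod_univ_three fun j => σ (x j),
          (isSeifertTuple_comp σ).prod, one_mul]
    _ = 1 := by
        rw [← Finset.prod_zpow]
        exact Finset.prod_eq_one fun j _ => htors j

lemma exists_apply_fibre_eq {e : Fin 3 → ℤ} {u v : A} (hpow : ∀ j, (u ^ e j) ^ a j = v ^ b j)
    (hu : u ^ ∑ j, e j ∈ zpowKer A (tripleLcm a)) : ∃ σ : SeifertGroup a b →* A, σ fibre = v := by
  obtain ⟨z, htors, hprod⟩ := exists_prod_eq_of_mem_zpowKer_tripleLcm hu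
  have hrel : IsSeifertTuple a b (fun j => z j * (u ^ e j)⁻¹) v := by
    refine ⟨fun j => Commute.all _ _, fun j => ?_, ?_⟩
    · rw [mul_zpow, htors, one_mul, inv_zpow, hpow, inv_mul_cancel]
    · rw [← Fin.prod_univ_three fun j => z j * (u ^ e j)⁻¹, Finset.prod_mul_distrib,
        Finset.prod_inv_distrib, prod_zpow_eq_zpow_sum, Fin.prod_univ_three, hprod, mul_inv_cancel]
  exact ⟨lift hrel, lift_fibre hrel⟩

/-- Write the image of the fibre as `u ^ D`. Then the elements `σ (x j) * u ^ e j` are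
`D`-torsion, and their product is `u ^ ∑ j, e j`. -/
lemma range_eval_fibre (hab : ∀ j, IsCoprime (a j) (b j)) {e : Fin 3 → ℤ} {D : ℕ}
    (hD : D = Nat.gcd (tripleLcm a) (Nat.card A))
    (he : ∀ j, a j * e j ≡ b j * D [ZMOD Nat.card A]) :
    (MonoidHom.eval (N := A) (fibre : SeifertGroup a b)).range =
      zpowRange A D ⊓ zpowKer A (∑ j, e j) := by
  have hker : zpowKer A D = zpowKer A (tripleLcm a) := by
    rw [hD, ← Int.gcd_natCast_natCast, zpowKer_gcd_natCard]
  have hpow (u : A) (j : Fin 3) : (u ^ e j) ^ a j = (u ^ (D : ℤ)) ^ b j := by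
    rw [← zpow_mul, ← zpow_mul, mul_comm, mul_comm (D : ℤ)]
    exact zpow_eq_zpow_of_modEq_natCard (he j) u
  refine le_antisymm ?_ ?_
  · rintro _ ⟨σ, rfl⟩
    obtain ⟨u, hu : u ^ (D : ℤ) = σ fibre⟩ : σ fibre ∈ zpowRange A D := zpowRange_le_of_dvd
      (Int.natCast_dvd_natCast.mpr (hD ▸ Nat.gcd_dvd_left _ _)) (apply_fibre_mem_zpowRange hab σ)
    exact ⟨⟨u, hu⟩, apply_fibre_zpow_sum_eq_one hker.ge hu fun j => hu ▸ hpow u j⟩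
  · rintro _ ⟨⟨u, rfl⟩, hu : (u ^ (D : ℤ)) ^ ∑ j, e j = 1⟩
    refine exists_apply_fibre_eq (hpow u) ?_
    rwa [← hker, mem_zpowKer, zpow_comm]

end SeifertGroup
end CommGroup

section Cyclic

variable {A : Type*} [CommGroup A] [IsCyclic A] [Finite A] {a b : Fin 3 → ℤ} {k D : ℕ}

lemma natCard_isTriangleTuple (a : Fin 3 → ℤ) (hk : Nat.card A = k)
    (hD : D = Nat.gcd (tripleLcm a) k) :
    Nat.card {y : Fin 3 → A // IsTriangleTuple a y} = (∏ j, Int.gcd (a j) k) / D := by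
  have hDpos : 0 < D := hD ▸ Nat.gcd_pos_of_pos_right _ (hk ▸ Nat.card_pos)
  refine (Nat.div_eq_of_eq_mul_left hDpos ?_).symm
  simpa only [natCard_zpowKer, hk, Int.gcd_natCast_natCast, ← hD] using
    (natCard_isTriangleTuple_mul (A := A) a).symm

lemma mul_mul_div_gcd_modEq {x y c : ℤ} (hx : x ∣ tripleLcm a) (hD : D = Nat.gcd (tripleLcm a) k)
    (hc : c * x ≡ Int.gcd x k [ZMOD k]) :
    x * (y * c * (D / Int.gcd x k : ℕ)) ≡ y * D [ZMOD k] := by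
  have hdvd : Int.gcd x k ∣ D := by
    rw [hD, ← Int.gcd_natCast_natCast]
    exact Int.gcd_dvd_gcd_of_dvd_left _ hx
  calc x * (y * c * (D / Int.gcd x k : ℕ)) = y * (c * x * (D / Int.gcd x k : ℕ)) := by ring
    _ ≡ y * (Int.gcd x k * (D / Int.gcd x k : ℕ)) [ZMOD k] := (hc.mul_right _).mul_left _
    _ = y * D := by rw [← Nat.cast_mul, Nat.mul_div_cancel' hdvd]

theorem natCard_hom_seifertGroup (hab : ∀ j, Int.gcd (a j) (b j) = 1)
    (hk : Nat.card A = k) (hD : D = Nat.gcd (tripleLcm a) k) {c : Fin 3 → ℤ}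
    (hc : ∀ j, c j * a j ≡ Int.gcd (a j) k [ZMOD k]) {B : ℤ}
    (hB : B = ∑ j, b j * c j * (D / Int.gcd (a j) k : ℕ)) :
    Nat.card (SeifertGroup a b →* A) = (∏ j, Int.gcd (a j) k) / D * Int.gcd B (k / D : ℕ) := by
  subst hk
  rw [SeifertGroup.natCard_hom_eq_mul_natCard_range_eval, natCard_isTriangleTuple a rfl hD,
    SeifertGroup.range_eval_fibre (fun j => Int.isCoprime_iff_gcd_eq_one.mpr (hab j)) hD
      fun j => mul_mul_div_gcd_modEq (dvd_tripleLcm a j) hD (hc j), ← hB,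
    natCard_zpowRange_inf_zpowKer (hD ▸ Nat.gcd_dvd_right _ _)]

lemma natCard_isTriangleTuple_and_eq_one_of_isCyclic (a : Fin 3 → ℤ) (j : Fin 3)
    (hk : Nat.card A = k) :
    Nat.card {y : Fin 3 → A // IsTriangleTuple a y ∧ y j = 1} =
      Nat.gcd (Int.gcd (a (j + 1)) (a (j - 1))) k := by
  rw [natCard_isTriangleTuple_and_eq_one, natCard_zpowKer, hk, Int.gcd_natCast_natCast]

end Cyclic

/-! ### Homomorphisms from `P` to semidirect products -/

section FixedPointFree

open SemidirectProduct

section Group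

variable {N Q P : Type*} [Group N] [Group Q] [Group P] {φ : Q →* MulAut N}

lemma inl_mul_inr_mul_inl_inv (w : N) (q : Q) :
    (inl w * inr q * (inl w)⁻¹ : N ⋊[φ] Q) = ⟨w / φ q w, q⟩ := by
  ext <;> simp [div_eq_mul_inv]

lemma exists_eq_inl_mul_inr_mul_inl_inv [Finite N] {q : Q}
    (hq : MonoidHom.FixedPointFree (φ q)) (u : N) :
    ∃ w, (⟨u, q⟩ : N ⋊[φ] Q) = inl w * inr q * (inl w)⁻¹ := by
  obtain ⟨w, rfl⟩ := hq.commutatorMap_surjective u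
  exact ⟨w, (inl_mul_inr_mul_inl_inv w q).symm⟩

lemma eq_inr_right_of_commute_inr {q : Q} (hq : MonoidHom.FixedPointFree (φ q)) {g : N ⋊[φ] Q}
    (hg : Commute g (inr q)) : g = inr g.right := by
  have hleft := congrArg SemidirectProduct.left hg.eq
  simp only [mul_left, left_inr, right_inr, map_one, mul_one, one_mul] at hleft
  ext
  · exact hq _ hleft.symm
  · rfl

/-- A lift `ρ` of `σ` is determined by the complement `{g | Commute g (ρ z)}` through which it
factors, and these complements are the `N`-conjugates of `Q`. -/
lemma natCard_rightHom_comp_eq_of_mem_center [Finite N] {σ : P →* Q} {z : P}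
    (hz : z ∈ Subgroup.center P) (hσ : MonoidHom.FixedPointFree (φ (σ z))) :
    Nat.card {ρ : P →* N ⋊[φ] Q // rightHom.comp ρ = σ} = Nat.card N := by
  have happly (w : N) (y : P) : (MulAut.conj (inl w)).toMonoidHom.comp ((inr (φ := φ)).comp σ) y =
      inl w * inr (σ y) * (inl w)⁻¹ := rfl
  let f (w : N) : {ρ : P →* N ⋊[φ] Q // rightHom.comp ρ = σ} :=
    ⟨(MulAut.conj (inl w)).toMonoidHom.comp (inr.comp σ), MonoidHom.ext fun y => by simp⟩
  refine (Nat.card_eq_of_bijective f ⟨fun w w' h => ?_, fun ⟨ρ, hρ⟩ => ?_⟩).symm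
  · refine hσ.commutatorMap_injective (congrArg SemidirectProduct.left ?_ :
      (⟨w / φ (σ z) w, σ z⟩ : N ⋊[φ] Q).left = (⟨w' / φ (σ z) w', σ z⟩ : N ⋊[φ] Q).left)
    rw [← inl_mul_inr_mul_inl_inv, ← inl_mul_inr_mul_inl_inv, ← happly, ← happly]
    exact DFunLike.congr_fun (congrArg Subtype.val h) z
  · have hright (y : P) : (ρ y).right = σ y := DFunLike.congr_fun hρ y
    obtain ⟨w, hw⟩ : ∃ w, ρ z = inl w * inr (σ z) * (inl w)⁻¹ := by
      rw [← hright z] at hσ ⊢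
      exact exists_eq_inl_mul_inr_mul_inl_inv hσ (ρ z).left
    let κ : MulAut (N ⋊[φ] Q) := MulAut.conj (inl w)⁻¹
    have hκ (y : P) : (κ (ρ y)).right = σ y := by simp [κ, hright]
    have hz' : κ (ρ z) = inr (σ z) := by
      rw [hw]
      simp [κ, mul_assoc]
    have hcomm (y : P) : Commute y z := Subgroup.mem_center_iff.mp hz y
    have hy (y : P) : κ (ρ y) = inr (σ y) := by
      rw [← hκ]
      exact eq_inr_right_of_commute_inr hσ (hz' ▸ ((hcomm y).map ρ).map κ)
    refine ⟨w, Subtype.ext (MonoidHom.ext fun y => ?_)⟩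
    rw [happly, ← hy]
    simp [κ, mul_assoc]

lemma natCard_rightHom_comp_eq_one :
    Nat.card {ρ : P →* N ⋊[φ] Q // rightHom.comp ρ = 1} = Nat.card (P →* N) := by
  refine (Nat.card_eq_of_bijective (fun τ : P →* N =>
    (⟨inl.comp τ, by rw [← MonoidHom.comp_assoc, rightHom_comp_inl, MonoidHom.one_comp]⟩ :
      {ρ : P →* N ⋊[φ] Q // rightHom.comp ρ = 1})) ⟨fun τ τ' h => ?_, fun ⟨ρ, hρ⟩ => ?_⟩).symm
  · exact (MonoidHom.cancel_left inl_injective).mp (congrArg Subtype.val h)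
  · have hright (y : P) : (ρ y).right = 1 := DFunLike.congr_fun hρ y
    refine ⟨MonoidHom.mk' (fun y => (ρ y).left) fun y y' => by simp [hright], ?_⟩
    exact Subtype.ext (MonoidHom.ext fun y => SemidirectProduct.ext rfl (hright y).symm)

end Group

section CommGroup

variable {N Q : Type*} [CommGroup N] [Group Q] {φ : Q →* MulAut N} {a b : Fin 3 → ℤ}

lemma eq_one_of_commute_of_right_eq_one {g v : N ⋊[φ] Q}
    (hg : MonoidHom.FixedPointFree (φ g.right)) (hv : v.right = 1) (h : Commute g v) : v = 1 := by
  have hleft := congrArg SemidirectProduct.left h.eq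
  rw [mul_left, mul_left, hv, map_one, MulAut.one_apply, mul_comm] at hleft
  exact SemidirectProduct.ext (hg _ (mul_right_cancel hleft)) hv

namespace SeifertGroup

lemma apply_fibre_eq_one_of_right_eq_one (hφ : ∀ q ≠ 1, MonoidHom.FixedPointFree (φ q))
    {ρ : SeifertGroup a b →* N ⋊[φ] Q} (hfibre : (ρ fibre).right = 1)
    (hρ : rightHom.comp ρ ≠ 1) : ρ fibre = 1 := by
  obtain ⟨j, hj⟩ : ∃ j, (ρ (x j)).right ≠ 1 := by
    contrapose! hρ
    exact hom_ext hρ hfibre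
  exact eq_one_of_commute_of_right_eq_one (hφ _ hj) hfibre ((isSeifertTuple_comp ρ).commute j)

lemma natCard_rightHom_comp_eq_of_apply_fibre_eq_one
    (hφ : ∀ q ≠ 1, MonoidHom.FixedPointFree (φ q)) {σ : SeifertGroup a b →* Q}
    (hfibre : σ fibre = 1) (hσ : σ ≠ 1) :
    Nat.card {ρ : SeifertGroup a b →* N ⋊[φ] Q // rightHom.comp ρ = σ} =
      Nat.card {u : Fin 3 → N // IsTriangleTuple a fun j => (⟨u j, σ (x j)⟩ : N ⋊[φ] Q)} := by
  have hiff (ρ : SeifertGroup a b →* N ⋊[φ] Q) :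
      rightHom.comp ρ = σ ↔ ρ fibre = 1 ∧ ∀ j, (ρ (x j)).right = σ (x j) := by
    refine ⟨?_, fun h => hom_ext h.2 ?_⟩
    · rintro rfl
      exact ⟨apply_fibre_eq_one_of_right_eq_one hφ hfibre hσ, fun _ => rfl⟩
    · rw [hfibre, MonoidHom.comp_apply, h.1, map_one]
  refine (Nat.card_congr (Equiv.subtypeEquivRight hiff)).trans
    ((natCard_hom_fibre_eq_one fun y : Fin 3 → N ⋊[φ] Q => ∀ j, (y j).right = σ (x j)).trans ?_)
  have hmk {y : Fin 3 → N ⋊[φ] Q} (hy : ∀ j, (y j).right = σ (x j)) :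
      (fun j => ⟨(y j).left, σ (x j)⟩) = y :=
    funext fun j => SemidirectProduct.ext rfl (hy j).symm
  exact Nat.card_congr
    { toFun y := ⟨fun j => (y.1 j).left, (hmk y.2.2).symm ▸ y.2.1⟩
      invFun u := ⟨fun j => ⟨u.1 j, σ (x j)⟩, u.2, fun _ => rfl⟩
      left_inv y := Subtype.ext (hmk y.2.2)
      right_inv u := rfl }

end SeifertGroup

variable [Finite N]

/-- For `q ≠ 1` the element `⟨u, q⟩` is conjugate to `inr q`, so there is no constraint on `u`. -/
lemma mk_zpow_eq_one_iff [DecidableEq Q] {q : Q}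
    (hq : q ≠ 1 → MonoidHom.FixedPointFree (φ q)) {x : ℤ} (hx : q ^ x = 1) {u : N} :
    (⟨u, q⟩ : N ⋊[φ] Q) ^ x = 1 ↔ u ∈ if q = 1 then zpowKer N x else ⊤ := by
  split_ifs with h
  · subst h
    rw [mem_zpowKer, ← inl_inj (φ := φ), map_zpow, map_one]
    rfl
  · obtain ⟨w, hw⟩ := exists_eq_inl_mul_inr_mul_inl_inv (hq h) u
    simp only [hw, Subgroup.mem_top, iff_true]
    rw [← MulAut.conj_apply, ← map_zpow, ← map_zpow, hx, map_one, map_one]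

/-- The automorphisms of `N` through which `u₁, u₂, u₃` enter the `N`-component of
`⟨u₁, s₁⟩ * ⟨u₂, s₂⟩ * ⟨u₃, s₃⟩`. -/
def partialProdAut (φ : Q →* MulAut N) (s : Fin 3 → Q) : Fin 3 → MulAut N :=
  ![1, φ (s 0), φ (s 0 * s 1)]

lemma isTriangleTuple_mk_iff [DecidableEq Q] (hφ : ∀ q ≠ 1, MonoidHom.FixedPointFree (φ q))
    {s : Fin 3 → Q} (hs : IsTriangleTuple a s) {u : Fin 3 → N} :
    IsTriangleTuple a (fun j => (⟨u j, s j⟩ : N ⋊[φ] Q)) ↔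
      (∀ j, u j ∈ if s j = 1 then zpowKer N (a j) else ⊤) ∧
        ∏ j, (partialProdAut φ s j).toMonoidHom (u j) = 1 := by
  have hprod : (⟨u 0, s 0⟩ * ⟨u 1, s 1⟩ * ⟨u 2, s 2⟩ : N ⋊[φ] Q) = 1 ↔
      ∏ j, (partialProdAut φ s j).toMonoidHom (u j) = 1 := by
    rw [SemidirectProduct.ext_iff, Fin.prod_univ_three]
    exact and_iff_left hs.prod
  rw [← hprod, ← forall_congr' fun j => mk_zpow_eq_one_iff (hφ (s j)) (hs.zpow_eq_one j)]
  exact ⟨fun h => ⟨h.zpow_eq_one, h.prod⟩, fun h => ⟨h.1, h.2⟩⟩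

lemma natCard_isTriangleTuple_mk_mul [DecidableEq Q]
    (hφ : ∀ q ≠ 1, MonoidHom.FixedPointFree (φ q)) {s : Fin 3 → Q} (hs : IsTriangleTuple a s)
    (hs1 : s ≠ 1) :
    Nat.card {u : Fin 3 → N // IsTriangleTuple a (fun j => (⟨u j, s j⟩ : N ⋊[φ] Q))} *
      Nat.card N = ∏ j, if s j = 1 then Nat.card (zpowKer N (a j)) else Nat.card N := by
  obtain ⟨i, hi⟩ := Function.ne_iff.mp hs1
  let K (j : Fin 3) : Subgroup N := if s j = 1 then zpowKer N (a j) else ⊤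
  have htop : ⨆ j, (K j).map (partialProdAut φ s j).toMonoidHom = ⊤ := by
    refine top_le_iff.mp (le_iSup_of_le i ?_)
    rw [show K i = ⊤ from if_neg hi]
    exact (Subgroup.map_top_of_surjective _ (partialProdAut φ s i).surjective).ge
  have hcard := natCard_prod_eq_one_mul_natCard_iSup_map K fun j =>
    (partialProdAut φ s j).toMonoidHom
  rw [htop, Subgroup.card_top] at hcard
  simp only [isTriangleTuple_mk_iff hφ hs]
  refine hcard.trans (Finset.prod_congr rfl fun j _ => ?_)
  simp only [K]
  split_ifs
  · rfl
  · exact Subgroup.card_top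

/-- At most one entry of a nontrivial triangle tuple is trivial, so that the product has at most
one factor different from `|N|`. -/
lemma natCard_isTriangleTuple_mk [DecidableEq Q]
    (hφ : ∀ q ≠ 1, MonoidHom.FixedPointFree (φ q)) {s : Fin 3 → Q} (hs : IsTriangleTuple a s)
    (hs1 : s ≠ 1) :
    (Nat.card {u : Fin 3 → N // IsTriangleTuple a (fun j => (⟨u j, s j⟩ : N ⋊[φ] Q))} : ℤ) =
      Nat.card N ^ 2 +
        ∑ j, if s j = 1 then
          (Nat.card (zpowKer N (a j)) : ℤ) * Nat.card N - (Nat.card N : ℤ) ^ 2 else 0 := by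
  have hN : (Nat.card N : ℤ) ≠ 0 := Nat.cast_ne_zero.mpr Nat.card_pos.ne'
  refine mul_right_cancel₀ hN ?_
  rw [← Nat.cast_mul, natCard_isTriangleTuple_mk_mul hφ hs hs1, Fin.prod_univ_three,
    Fin.sum_univ_three]
  have hprod := hs.prod
  have hne : ¬(s 0 = 1 ∧ s 1 = 1 ∧ s 2 = 1) := fun h =>
    hs1 (funext fun j => by fin_cases j <;> simp [h])
  by_cases h₀ : s 0 = 1 <;> by_cases h₁ : s 1 = 1 <;> by_cases h₂ : s 2 = 1 <;>
    simp_all <;> ring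

namespace SeifertGroup

/-- The cases `σ h ≠ 1`, `σ h = 1 ≠ σ` and `σ = 1` in a single formula, to be summed over `σ`. -/
lemma natCard_rightHom_comp_eq [DecidableEq Q] [DecidableEq (SeifertGroup a b →* Q)]
    (hφ : ∀ q ≠ 1, MonoidHom.FixedPointFree (φ q)) (σ : SeifertGroup a b →* Q) :
    (Nat.card {ρ : SeifertGroup a b →* N ⋊[φ] Q // rightHom.comp ρ = σ} : ℤ) =
      Nat.card N + (if σ fibre = 1 then ((Nat.card N : ℤ) ^ 2 - Nat.card N) else 0) +
        (∑ j, if σ fibre = 1 ∧ σ (x j) = 1 then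
          (Nat.card (zpowKer N (a j)) : ℤ) * Nat.card N - (Nat.card N : ℤ) ^ 2 else 0) +
        if σ = 1 then (Nat.card (SeifertGroup a b →* N) : ℤ) - (Nat.card N : ℤ) ^ 2 -
          ∑ j, ((Nat.card (zpowKer N (a j)) : ℤ) * Nat.card N - (Nat.card N : ℤ) ^ 2) else 0 := by
  by_cases hfibre : σ fibre = 1
  · by_cases hσ : σ = 1
    · subst hσ
      simp [natCard_rightHom_comp_eq_one, -mem_zpowKer]
    · have hs : IsTriangleTuple a fun j => σ (x j) :=
        isSeifertTuple_one_iff.mp (hfibre ▸ isSeifertTuple_comp σ)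
      have hs1 : (fun j => σ (x j)) ≠ 1 := fun h => hσ (hom_ext (congrFun h) hfibre)
      rw [natCard_rightHom_comp_eq_of_apply_fibre_eq_one hφ hfibre hσ,
        natCard_isTriangleTuple_mk hφ hs hs1]
      simp [hfibre, hσ, -mem_zpowKer]
  · have hσ : σ ≠ 1 := fun h => hfibre (h ▸ rfl)
    rw [natCard_rightHom_comp_eq_of_mem_center fibre_mem_center (hφ _ hfibre)]
    simp [hfibre, hσ, -mem_zpowKer]

end SeifertGroup

lemma sum_ite_eq_natCard_mul {α R : Type*} [Fintype α] [NonAssocSemiring R] (p : α → Prop)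
    [DecidablePred p] (c : R) : ∑ i, (if p i then c else 0) = Nat.card {i // p i} * c := by
  rw [← Finset.sum_filter, Finset.sum_const, nsmul_eq_mul, Nat.card_eq_fintype_card,
    Fintype.card_subtype]

theorem natCard_hom_semidirectProduct [Finite Q]
    (hφ : ∀ q ≠ 1, MonoidHom.FixedPointFree (φ q)) :
    (Nat.card (SeifertGroup a b →* N ⋊[φ] Q) : ℤ) =
      Nat.card N * Nat.card (SeifertGroup a b →* Q) +
        ((Nat.card N : ℤ) ^ 2 - Nat.card N) * Nat.card {y : Fin 3 → Q // IsTriangleTuple a y} +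
        ∑ j, ((Nat.card (zpowKer N (a j)) : ℤ) * Nat.card N - (Nat.card N : ℤ) ^ 2) *
          ((Nat.card {y : Fin 3 → Q // IsTriangleTuple a y ∧ y j = 1} : ℤ) - 1) +
        Nat.card (SeifertGroup a b →* N) - (Nat.card N : ℤ) ^ 2 := by
  classical
  have := Fintype.ofFinite (SeifertGroup a b →* Q)
  have : Finite (N ⋊[φ] Q) := Finite.of_equiv _ SemidirectProduct.equivProd.symm
  have htri : Nat.card {σ : SeifertGroup a b →* Q // σ SeifertGroup.fibre = 1} =
      Nat.card {y : Fin 3 → Q // IsTriangleTuple a y} := by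
    simpa using SeifertGroup.natCard_hom_fibre_eq_one (a := a) (b := b) (G := Q) fun _ => True
  rw [Nat.card_congr (Equiv.sigmaFiberEquiv (rightHom (φ := φ)).comp).symm, Nat.card_sigma,
    Nat.cast_sum]
  simp only [SeifertGroup.natCard_rightHom_comp_eq hφ, Finset.sum_add_distrib]
  rw [Finset.sum_comm]
  simp only [sum_ite_eq_natCard_mul, htri,
    fun j => SeifertGroup.natCard_hom_fibre_eq_one (a := a) (b := b) (G := Q) fun y => y j = 1]
  simp only [Finset.sum_const, Finset.card_univ, nsmul_eq_mul, Nat.card_unique, Nat.cast_one,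
    one_mul, mul_sub, mul_one, Finset.sum_sub_distrib, ← Nat.card_eq_fintype_card, mul_comm]
  ring

end CommGroup
end FixedPointFree

/-! ### Greatest common divisors and prime powers -/

section Arithmetic

lemma div_lcm_div_gcd_eq_gcd {n d : ℕ} (hn : n ≠ 0) (hd : d ∣ n) (x : ℤ) :
    n / Nat.lcm d (n / Int.gcd n x) = Int.gcd x (n / d : ℕ) := by
  have hx : Int.gcd n x ∣ n := Nat.gcd_dvd_left _ _
  have hd' : n / d ∣ n := Nat.div_dvd_of_dvd hd
  have hlcm : Nat.lcm d (n / Int.gcd n x) = n / Nat.gcd (n / d) (Int.gcd n x) := by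
    rw [← Nat.div_lcm_eq_div_gcd hd' hx, Nat.div_div_self hd hn]
  rw [hlcm, Nat.div_div_self ((Nat.gcd_dvd_left _ _).trans hd') hn]
  rw [← Int.gcd_natCast_natCast, ← Int.gcd_assoc, Int.gcd_natCast_natCast, Nat.gcd_eq_left hd',
    Int.gcd_comm]

lemma gcd_prime_pow {p : ℕ} [hp : Fact p.Prime] (l : ℕ) (x : ℤ) :
    Int.gcd x (p ^ l : ℕ) = p ^ if x = 0 then l else min l (padicValInt p x) := by
  split_ifs with hx
  · rw [hx, Int.gcd_zero_left, Int.natAbs_natCast]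
  · have hiff (i : ℕ) : p ^ i ∣ Int.gcd x (p ^ l : ℕ) ↔ i ≤ min l (padicValInt p x) := by
      rw [← Int.natCast_dvd_natCast, Int.dvd_coe_gcd_iff, Int.natCast_dvd_natCast,
        Nat.pow_dvd_pow_iff_le_right hp.out.one_lt, Nat.cast_pow, padicValInt_dvd_iff,
        or_iff_right hx, and_comm, le_min_iff]
    obtain ⟨k, -, hk⟩ := (Nat.dvd_prime_pow hp.out).mp (Nat.gcd_dvd_right x.natAbs (p ^ l))
    refine Nat.dvd_antisymm ?_ ((hiff _).mpr le_rfl)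
    change Int.gcd x (p ^ l : ℕ) = p ^ k at hk
    rw [hk]
    exact pow_dvd_pow p ((hiff k).mp hk.symm.dvd)

lemma gcd_tripleLcm_dvd_prod_gcd (a : Fin 3 → ℤ) (k : ℕ) :
    Nat.gcd (tripleLcm a) k ∣ ∏ j, Int.gcd (a j) k := by
  rw [Fin.prod_univ_three, mul_assoc]
  calc Nat.gcd (tripleLcm a) k
      ∣ Nat.gcd ((a 0).natAbs * ((a 1).natAbs * (a 2).natAbs)) k :=
        Nat.gcd_dvd_gcd_of_dvd_left _
          ((Nat.lcm_dvd_mul _ _).trans (mul_dvd_mul_left _ (Nat.lcm_dvd_mul _ _)))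
    _ ∣ _ := (Nat.gcd_mul_left_dvd_mul_gcd _ _ _).trans
          (mul_dvd_mul_left _ (Nat.gcd_mul_left_dvd_mul_gcd _ _ _))

variable {p m f : ℕ} {a : Fin 3 → ℤ}

lemma prod_gcd_div_mul_gcd_eq_pow (hp : p.Prime) (ha : ∀ j, a j ≠ 0)
    (hf : p ^ f = Nat.gcd (tripleLcm a) (p ^ m)) (B : ℤ) :
    (∏ j, Int.gcd (a j) (p ^ m : ℕ)) / p ^ f * Int.gcd B (p ^ m / p ^ f : ℕ) =
      p ^ if f < m then (∑ j, padicValInt p (a j)) - f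
          + (if B = 0 then m - f else min (m - f) (padicValInt p B))
        else (∑ j, min (padicValInt p (a j)) m) - m := by
  have := Fact.mk hp
  have hgcd (j : Fin 3) : Int.gcd (a j) (p ^ m : ℕ) = p ^ min (padicValInt p (a j)) m := by
    rw [gcd_prime_pow, if_neg (ha j), min_comm]
  have hle (j : Fin 3) : min (padicValInt p (a j)) m ≤ f := by
    rw [← Nat.pow_dvd_pow_iff_le_right hp.one_lt, ← hgcd, hf, ← Int.gcd_natCast_natCast]
    exact Int.gcd_dvd_gcd_of_dvd_left _ (dvd_tripleLcm a j)
  have hfm : f ≤ m := by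
    rw [← Nat.pow_dvd_pow_iff_le_right hp.one_lt, hf]
    exact Nat.gcd_dvd_right _ _
  have hfs : f ≤ ∑ j, min (padicValInt p (a j)) m := by
    rw [← Nat.pow_dvd_pow_iff_le_right hp.one_lt, hf, ← Finset.prod_pow_eq_pow_sum,
      ← Finset.prod_congr rfl fun j _ => hgcd j]
    exact gcd_tripleLcm_dvd_prod_gcd a _
  rw [Finset.prod_congr rfl fun j _ => hgcd j, Finset.prod_pow_eq_pow_sum, Nat.pow_div hfs hp.pos,
    Nat.pow_div hfm hp.pos, gcd_prime_pow, ← pow_add]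
  congr 1
  by_cases hlt : f < m
  · have hmin (j : Fin 3) : min (padicValInt p (a j)) m = padicValInt p (a j) :=
      min_eq_left ((min_le_iff.mp (hle j)).elim (fun h => h.trans hfm) fun h => absurd hlt h.not_gt)
    rw [if_pos hlt, Finset.sum_congr rfl fun j _ => hmin j]
  · obtain rfl : f = m := hfm.eq_of_not_lt hlt
    simp

end Arithmetic

section General

open SemidirectProduct

variable {N Q : Type*} [CommGroup N] [IsCyclic N] [Finite N] [CommGroup Q] [IsCyclic Q] [Finite Q]

theorem card_homs_seifert_to_semidirect_zmod_general (a b : Fin 3 → ℤ)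
    (hab : ∀ j, Int.gcd (a j) (b j) = 1) {φ : Q →* MulAut N}
    (hφ : ∀ q ≠ 1, MonoidHom.FixedPointFree (φ q)) {k n : ℕ} (hk : Nat.card N = k)
    (hn : Nat.card Q = n) {D : ℕ} (hD : D = Nat.gcd (tripleLcm a) k) {c : Fin 3 → ℤ}
    (hc : ∀ j, c j * a j ≡ Int.gcd (a j) k [ZMOD k]) {B : ℤ}
    (hB : B = ∑ j, b j * c j * (D / Int.gcd (a j) k : ℕ)) {D' : ℕ}
    (hD' : D' = Nat.gcd (tripleLcm a) n) {c' : Fin 3 → ℤ}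
    (hc' : ∀ j, c' j * a j ≡ Int.gcd (a j) n [ZMOD n]) {B' : ℤ}
    (hB' : B' = ∑ j, b j * c' j * (D' / Int.gcd (a j) n : ℕ)) {E : ℕ}
    (hE : E = n / Nat.lcm D' (n / Int.gcd n B')) {κ₂ : ℤ}
    (hκ₂ : κ₂ = 2 - ∑ j, (Nat.gcd (Int.gcd (a (j + 1)) (a (j - 1))) n : ℤ)
      + ((∏ j, Int.gcd (a j) n) / D' : ℕ)) {κ₁ : ℤ}
    (hκ₁ : κ₁ = ∑ j, (Int.gcd (a j) k : ℤ) *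
        ((Nat.gcd (Int.gcd (a (j + 1)) (a (j - 1))) n : ℤ) - 1)
      + ((E : ℤ) - 1) * ((∏ j, Int.gcd (a j) n) / D' : ℕ)) :
    (Nat.card (SeifertGroup a b →* N ⋊[φ] Q) : ℤ) = κ₂ * k ^ 2 + κ₁ * k +
      ((∏ j, Int.gcd (a j) k) / D * Int.gcd B (k / D : ℕ) : ℕ) := by
  have hEB : E = Int.gcd B' (n / D' : ℕ) :=
    hE.trans (div_lcm_div_gcd_eq_gcd (hn ▸ Nat.card_pos.ne') (hD' ▸ Nat.gcd_dvd_right _ _) B')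
  rw [natCard_hom_semidirectProduct hφ, natCard_hom_seifertGroup hab hk hD hc hB,
    natCard_hom_seifertGroup hab hn hD' hc' hB', natCard_isTriangleTuple a hn hD', ← hEB, hκ₂, hκ₁]
  simp only [natCard_zpowKer, natCard_isTriangleTuple_and_eq_one_of_isCyclic a _ hn, hk,
    Fin.sum_univ_three, Nat.cast_mul]
  ring

end General

section Multiplication

lemma pow_apply_ofAdd {R : Type*} [Semiring R] {α : MulAut (Multiplicative R)} {r : R}
    (hα : ∀ x, α (ofAdd x) = ofAdd (r * x)) (i : ℕ) (x : R) :
    (α ^ i) (ofAdd x) = ofAdd (r ^ i * x) := by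
  induction i with
  | zero => simp
  | succ i ih => rw [pow_succ', MulAut.mul_apply, ih, hα, pow_succ', mul_assoc]

lemma fixedPointFree_of_isUnit_sub_one {R : Type*} [Ring R] {α : MulAut (Multiplicative R)} {r : R}
    (hα : ∀ x, α (ofAdd x) = ofAdd (r * x)) (hr : IsUnit (r - 1)) :
    MonoidHom.FixedPointFree α := by
  intro g hg
  have hfix : r * g.toAdd = g.toAdd := ofAdd.injective ((hα g.toAdd).symm.trans hg)
  refine toAdd.injective (hr.mul_left_cancel ?_)
  rw [sub_mul, one_mul, hfix, sub_self, toAdd_one, mul_zero]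

lemma isUnit_pow_sub_one {p m n : ℕ} (hp : p.Prime) (hdvd : n ∣ p - 1) {r : ZMod (p ^ m)}
    (hr : orderOf r = n) {i : ℕ} (hi : ¬n ∣ i) : IsUnit (r ^ i - 1) := by
  have := Fact.mk hp
  have hpn : p.Coprime n := Nat.Coprime.coprime_dvd_right hdvd
    ((Nat.coprime_self_sub_right hp.one_le).mpr (Nat.coprime_one_right p))
  have hcop : (orderOf (r ^ i)).Coprime (p ^ m) :=
    (hpn.symm.coprime_dvd_left (hr ▸ orderOf_pow_dvd i)).pow_right m
  refine (ZMod.eq_one_or_isUnit_sub_one rfl _ hcop).resolve_left fun h => hi ?_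
  exact hr ▸ orderOf_dvd_of_pow_eq_one h

lemma fixedPointFree_of_apply_ofAdd_one {p m n : ℕ} (hp : p.Prime) (hdvd : n ∣ p - 1)
    {r : (ZMod (p ^ m))ˣ} (hr : orderOf r = n)
    {ψ : Multiplicative (ZMod n) →* MulAut (Multiplicative (ZMod (p ^ m)))}
    (hψ : ∀ x, ψ (ofAdd 1) (ofAdd x) = ofAdd ((r : ZMod (p ^ m)) * x))
    {q : Multiplicative (ZMod n)} (hq : q ≠ 1) : MonoidHom.FixedPointFree (ψ q) := by
  have : NeZero n := ⟨ne_zero_of_dvd_ne_zero (Nat.sub_ne_zero_of_lt hp.one_lt) hdvd⟩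
  obtain ⟨i, hi⟩ := ZMod.natCast_zmod_surjective q.toAdd
  obtain rfl : ofAdd (1 : ZMod n) ^ i = q := by
    rw [← ofAdd_nsmul, nsmul_one, hi, ofAdd_toAdd]
  rw [map_pow]
  refine fixedPointFree_of_isUnit_sub_one (pow_apply_ofAdd hψ i)
    (isUnit_pow_sub_one hp hdvd (orderOf_units.trans hr) fun hni => hq ?_)
  rwa [← toAdd_eq_zero, ← hi, ZMod.natCast_eq_zero_iff]

end Multiplication

/-- Theorem 3.1 of the paper.  Counting homomorphisms from the
fundamental group of the small Seifert manifold `S²(a₁/b₁, a₂/b₂, a₃/b₃)` to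
`G = ℤ/p^mℤ ⋊_r ℤ/nℤ`:  with `p^f = gcd(lcm(a₁,a₂,a₃), p^m)`, `c_j·a_j ≡ gcd(a_j,p^m)
(mod p^m)`, `B = Σ b_j c_j p^f/gcd(a_j,p^m)`, `D' = gcd(lcm(a₁,a₂,a₃), n)`,
`c'_j·a_j ≡ gcd(a_j,n) (mod n)`, `B' = Σ b_j c'_j D'/gcd(a_j,n)`,
`E = n/lcm(D', n/gcd(n,B'))`, `κ₂ = 2 - Σ gcd(a_{j+1},a_{j-1},n) + (Π gcd(a_j,n))/D'`,
`κ₁ = Σ gcd(a_j,p^m)(gcd(a_{j+1},a_{j-1},n) - 1) + (E-1)(Π gcd(a_j,n))/D'`, and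
`μ = Σ‖a_j‖_p - f + min{m-f, ‖B‖_p}` if `f < m` (with `min{m-f,‖B‖_p} = m-f` when `B=0`),
`μ = Σ min{‖a_j‖_p, m} - m` if `f = m`, the number of homomorphisms equals
`κ₂ p^{2m} + κ₁ p^m + p^μ`. -/
theorem card_homs_seifert_to_semidirect_zmod
    (a b : Fin 3 → ℤ) (ha : ∀ j, a j ≠ 0) (hab : ∀ j, Int.gcd (a j) (b j) = 1)
    (p m n : ℕ) (hp : p.Prime) (hm : 1 ≤ m) (hn : 0 < n) (hdvd : n ∣ p - 1)
    (r : (ZMod (p ^ m))ˣ) (hr : orderOf r = n)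
    (ψ : Multiplicative (ZMod n) →* MulAut (Multiplicative (ZMod (p ^ m))))
    (hψ : ∀ x : ZMod (p ^ m),
      ψ (ofAdd (1 : ZMod n)) (ofAdd x) = ofAdd ((r : ZMod (p ^ m)) * x))
    (f : ℕ) (hf : p ^ f = Nat.gcd (Int.lcm (a 0) (Int.lcm (a 1) (a 2))) (p ^ m))
    (c : Fin 3 → ℤ)
    (hc : ∀ j, c j * a j ≡ (Int.gcd (a j) ((p : ℤ) ^ m) : ℤ) [ZMOD ((p : ℤ) ^ m)])
    (B : ℤ) (hB : B = ∑ j : Fin 3, b j * c j * ((p ^ f / Int.gcd (a j) ((p : ℤ) ^ m) : ℕ) : ℤ))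
    (D' : ℕ) (hD' : D' = Nat.gcd (Int.lcm (a 0) (Int.lcm (a 1) (a 2))) n)
    (c' : Fin 3 → ℤ)
    (hc' : ∀ j, c' j * a j ≡ (Int.gcd (a j) (n : ℤ) : ℤ) [ZMOD (n : ℤ)])
    (B' : ℤ) (hB' : B' = ∑ j : Fin 3, b j * c' j * ((D' / Int.gcd (a j) (n : ℤ) : ℕ) : ℤ))
    (E : ℕ) (hE : E = n / Nat.lcm D' (n / Int.gcd (n : ℤ) B'))
    (κ₂ : ℤ)
    (hκ₂ : κ₂ = 2 - ∑ j : Fin 3, (Nat.gcd (Int.gcd (a (j + 1)) (a (j - 1))) n : ℤ)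
      + (((∏ j : Fin 3, Int.gcd (a j) (n : ℤ)) / D' : ℕ) : ℤ))
    (κ₁ : ℤ)
    (hκ₁ : κ₁ = ∑ j : Fin 3, (Int.gcd (a j) ((p : ℤ) ^ m) : ℤ) *
        ((Nat.gcd (Int.gcd (a (j + 1)) (a (j - 1))) n : ℤ) - 1)
      + ((E : ℤ) - 1) * (((∏ j : Fin 3, Int.gcd (a j) (n : ℤ)) / D' : ℕ) : ℤ))
    (μ : ℕ)
    (hμ : μ = if f < m then
        (∑ j : Fin 3, padicValInt p (a j)) - f
          + (if B = 0 then m - f else min (m - f) (padicValInt p B))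
      else (∑ j : Fin 3, min (padicValInt p (a j)) m) - m) :
    (Nat.card (PresentedGroup (seifertRels a b) →*
        (Multiplicative (ZMod (p ^ m)) ⋊[ψ] Multiplicative (ZMod n))) : ℤ)
      = κ₂ * (p : ℤ) ^ (2 * m) + κ₁ * (p : ℤ) ^ m + (p : ℤ) ^ μ := by
  have : NeZero (p ^ m) := ⟨pow_ne_zero m hp.ne_zero⟩
  have : NeZero n := ⟨hn.ne'⟩
  rw [← Nat.cast_pow] at hc hB hκ₁
  rw [card_homs_seifert_to_semidirect_zmod_general a b hab
    (fun q => fixedPointFree_of_apply_ofAdd_one hp hdvd hr hψ) (Nat.card_zmod _) (Nat.card_zmod n)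
    hf hc hB hD' hc' hB' hE hκ₂ hκ₁, prod_gcd_div_mul_gcd_eq_pow hp ha hf, ← hμ]
  push_cast
  rw [← pow_mul, mul_comm m]
end

section
/- Let a₁, a₂, a₃ be nonzero integers and b₁, b₂, b₃ integers with gcd(a_j, b_j) = 1 for j = 1,2,3. Let P be the group with presentation ⟨x₁, x₂, x₃, h | x_j h x_j^{−1} h^{−1} (j=1,2,3), x_j^{a_j} h^{b_j} (j=1,2,3), x₁x₂x₃⟩. Let p be a prime, h ≥ 1, let F_{p^h} be the field with p^h elements, let r ∈ F_{p^h}^× have multiplicative order n, and let G = F_{p^h} ⋊_r ℤ/nℤ. Define (indices j taken mod 3): D' = gcd(lcm(a₁,a₂,a₃), n); integers c'_j with c'_j·a_j ≡ gcd(a_j, n) (mod n); B' = Σ_{j=1}^{3} b_j·c'_j·D'/gcd(a_j, n); E = n / lcm(D', n/gcd(n, B')); κ₂ = 2 − Σ_{j=1}^{3} gcd(a_{j+1}, a_{j−1}, n) + (1/D')·Π_{j=1}^{3} gcd(a_j, n); κ̃₁ = Σ_{j=1}^{3} (gcd(a_{j+1}, a_{j−1}, n) − 1)·gcd(a_j,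 p)^h + ((E−1)/D')·Π_{j=1}^{3} gcd(a_j, n); and C = p^{−h}·Π_{j=1}^{3} gcd(a_j, p)^h if p divides a₁a₂a₃, while C = (p^h − 1) + 1 = p^h if p does not divide a₁a₂a₃ and Σ_{j=1}^{3} a_j^{−1} b_j ≡ 0 (mod p) (inverses taken mod p), and C = 1 if p does not divide a₁a₂a₃ and Σ_{j=1}^{3} a_j^{−1} b_j ≢ 0 (mod p). Then the number of group homomorphisms from P to G equals κ₂·p^{2h} + κ̃₁·p^h + C. -/
open Multiplicative

/-!
A homomorphism `P → F ⋊ ℤ/n` is a homomorphism `σ : P → ℤ/n` together with a cocycle over it, that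
is, an `F`-valued solution of the relations linearised along `σ`. The number of cocycles depends
only on which of the generators `σ` kills. If `σ h ≠ 0`, only the `|F|` coboundaries remain. If
`σ h = 0` but `σ ≠ 0`, then the value at `h` vanishes, the relation `x_j ^ a_j h ^ b_j` says nothing
about the value `u_j` at `x_j` when `σ x_j ≠ 0` and `a_j u_j = 0` when `σ x_j = 0`, and the
relation `x₁ x₂ x₃` removes one dimension; since the `σ x_j` add up to zero, at most one of them
vanishes. The case `σ = 0` gives the constant `C`.

Adding up the cocycles, one has to count the `σ`, those with `σ h = 0` and those with
`σ h = σ x_j = 0`. The `σ` with `σ h = 0` form the kernel of the sum map from the product of the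
`a_j`-torsion subgroups of `ℤ/n`, whose image is the `D'`-torsion. The possible values `σ h` are the
multiples of `D'` annihilated by `B'`.
-/

section AddSubgroupCard

open AddSubgroup

variable {ι M N : Type*} [AddCommGroup M] [AddCommGroup N]

lemma card_ker_addSubgroupOf_mul_card_map (f : M →+ N) (S : AddSubgroup M) :
    Nat.card (f.ker.addSubgroupOf S) * Nat.card (S.map f) = Nat.card S := by
  rw [← relIndex_ker, relIndex, card_mul_index]

lemma card_pi_inf_ker_mul_card_map [Fintype ι] (H : ι → AddSubgroup M) (f : (ι → M) →+ N) :
    Nat.card {u : ι → M // (∀ i, u i ∈ H i) ∧ f u = 0} *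
        Nat.card ((AddSubgroup.pi Set.univ H).map f) = ∏ i, Nat.card (H i) := by
  have card_pi : Nat.card (AddSubgroup.pi Set.univ H) = ∏ i, Nat.card (H i) := by
    rw [← Nat.card_pi]
    exact Nat.card_congr (Equiv.Set.univPi fun i => (H i : Set M))
  rw [← card_pi, ← card_ker_addSubgroupOf_mul_card_map f]
  congr 1
  refine Nat.card_congr (Equiv.trans (Equiv.subtypeEquivRight fun u => ?_)
    (Equiv.subtypeSubtypeEquivSubtypeInter (· ∈ AddSubgroup.pi Set.univ H) (f · = 0)).symm)
  simp [AddSubgroup.mem_pi]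

end AddSubgroupCard

section Torsion

open AddSubgroup

variable {A : Type*} [AddCommGroup A]

lemma torsionBy_le_torsionBy_of_dvd {a b : ℤ} (h : a ∣ b) : torsionBy A a ≤ torsionBy A b :=
  Submodule.torsionBy_le_torsionBy_of_dvd a b h

lemma torsionBy_gcd (a b : ℤ) :
    torsionBy A (Int.gcd a b : ℤ) = torsionBy A a ⊓ torsionBy A b := by
  refine le_antisymm (le_inf (torsionBy_le_torsionBy_of_dvd (Int.gcd_dvd_left ..))
    (torsionBy_le_torsionBy_of_dvd (Int.gcd_dvd_right ..))) ?_
  rintro z ⟨hza : a • z = 0, hzb : b • z = 0⟩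
  change (Int.gcd a b : ℤ) • z = 0
  rw [Int.gcd_eq_gcd_ab, add_smul, mul_comm, mul_smul, hza, mul_comm, mul_smul, hzb]
  simp

lemma torsionBy_lcm (d e : ℕ) :
    torsionBy A (d.lcm e : ℤ) = torsionBy A (d : ℤ) ⊔ torsionBy A (e : ℤ) := by
  refine le_antisymm ?_ (sup_le
    (torsionBy_le_torsionBy_of_dvd (Int.natCast_dvd_natCast.2 (Nat.dvd_lcm_left d e)))
    (torsionBy_le_torsionBy_of_dvd (Int.natCast_dvd_natCast.2 (Nat.dvd_lcm_right d e))))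
  obtain ⟨d', e', hcoprime, hd, he⟩ := Nat.exists_coprime d e
  obtain ⟨u, v, huv⟩ := hcoprime.isCoprime
  generalize d.gcd e = g at hd he
  subst hd he
  rw [Nat.lcm_mul_right, hcoprime.lcm_eq_mul]
  intro z (hz : ((d' * e' * g : ℕ) : ℤ) • z = 0)
  push_cast at hz
  have hsplit : z = (v * e') • z + (u * d') • z := by rw [← add_smul, add_comm, huv, one_smul]
  rw [hsplit]
  refine add_mem_sup ?_ ?_
  · change ((d' * g : ℕ) : ℤ) • (v * e') • z = 0
    rw [← mul_smul, show ((d' * g : ℕ) : ℤ) * (v * e') = v * (d' * e' * g) by push_cast; ring,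
      mul_smul, hz, smul_zero]
  · change ((e' * g : ℕ) : ℤ) • (u * d') • z = 0
    rw [← mul_smul, show ((e' * g : ℕ) : ℤ) * (u * d') = u * (d' * e' * g) by push_cast; ring,
      mul_smul, hz, smul_zero]

lemma torsionBy_finset_lcm {ι : Type*} (s : Finset ι) (d : ι → ℕ) :
    torsionBy A ((s.lcm d : ℕ) : ℤ) = ⨆ j ∈ s, torsionBy A (d j : ℤ) := by
  classical
  induction s using Finset.induction_on with
  | empty => ext; simp
  | insert j s _ ih =>
    rw [Finset.lcm_insert, Finset.iSup_insert, ← ih]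
    exact torsionBy_lcm _ _

lemma map_sum_pi_torsionBy {ι : Type*} [Fintype ι] (d : ι → ℕ) :
    (AddSubgroup.pi Set.univ fun j => torsionBy A (d j : ℤ)).map
        (∑ j, Pi.evalAddMonoidHom (fun _ => A) j) = torsionBy A ((Finset.univ.lcm d : ℕ) : ℤ) := by
  classical
  apply le_antisymm
  · rintro _ ⟨t, ht, rfl⟩
    rw [AddMonoidHom.finsetSum_apply]
    exact sum_mem fun j hj => torsionBy_le_torsionBy_of_dvd
      (Int.natCast_dvd_natCast.2 (Finset.dvd_lcm hj)) (ht j trivial)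
  · rw [torsionBy_finset_lcm]
    refine iSup₂_le fun j _ z hz => ⟨Pi.single j z, ?_, ?_⟩
    · exact (single_mem_pi _ _).2 fun _ => hz
    · simp

end Torsion

section ZModSubgroups

open AddSubgroup

variable {n : ℕ}

lemma mem_zmultiples_zmod_iff_dvd {x m : ZMod n} : m ∈ zmultiples x ↔ x ∣ m := by
  simp only [mem_zmultiples_iff, zsmul_eq_mul, dvd_iff_exists_eq_mul_left, eq_comm (a := m)]
  exact (ZMod.intCast_surjective.exists (p := (· * x = m))).symm

lemma natCast_dvd_zmod_iff [NeZero n] {d : ℕ} (hd : d ∣ n) {m : ZMod n} :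
    (d : ZMod n) ∣ m ↔ d ∣ m.val := by
  refine ⟨?_, fun ⟨k, hk⟩ => ⟨k, ?_⟩⟩
  · rintro ⟨k, rfl⟩
    rw [← ZMod.natCast_zmod_val k, ← Nat.cast_mul, ZMod.val_natCast, Nat.dvd_mod_iff hd]
    exact dvd_mul_right d _
  · rw [← Nat.cast_mul, ← hk, ZMod.natCast_zmod_val]

lemma card_zmultiples_zmod_natCast [NeZero n] {d : ℕ} (hd : d ∣ n) :
    Nat.card (zmultiples (d : ZMod n)) = n / d := by
  rw [Nat.card_zmultiples, ZMod.addOrderOf_coe _ (NeZero.ne n), Nat.gcd_eq_right hd]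

lemma zmultiples_zmod_natCast_inf [NeZero n] {d e : ℕ} (hd : d ∣ n) (he : e ∣ n) :
    zmultiples (d : ZMod n) ⊓ zmultiples (e : ZMod n) =
      zmultiples ((d.lcm e : ℕ) : ZMod n) := by
  ext m
  rw [mem_inf, mem_zmultiples_zmod_iff_dvd, mem_zmultiples_zmod_iff_dvd,
    mem_zmultiples_zmod_iff_dvd, natCast_dvd_zmod_iff hd, natCast_dvd_zmod_iff he,
    natCast_dvd_zmod_iff (Nat.lcm_dvd hd he), Nat.lcm_dvd_iff]

lemma torsionBy_zmod_gcd (a : ℤ) :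
    torsionBy (ZMod n) (Int.gcd a n : ℤ) = torsionBy (ZMod n) a := by
  rw [torsionBy_gcd, inf_eq_left]
  intro z _
  change (n : ℤ) • z = 0
  simp

lemma torsionBy_zmod_eq_zmultiples [NeZero n] (a : ℤ) :
    torsionBy (ZMod n) a = zmultiples ((n / Int.gcd n a : ℕ) : ZMod n) := by
  set g := Int.gcd n a
  have hgn : g ∣ n := Int.natCast_dvd_natCast.1 (Int.gcd_dvd_left ..)
  have hg : 0 < g := Nat.pos_of_dvd_of_pos hgn (NeZero.pos n)
  ext m
  rw [mem_zmultiples_zmod_iff_dvd, natCast_dvd_zmod_iff (Nat.div_dvd_of_dvd hgn),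
    Nat.div_dvd_iff_dvd_mul hgn hg, ← torsionBy_zmod_gcd, Int.gcd_comm]
  change ((g : ℤ) • m = 0) ↔ _
  rw [natCast_zsmul, nsmul_eq_mul, ← ZMod.natCast_eq_zero_iff, Nat.cast_mul,
    ZMod.natCast_zmod_val]

lemma card_torsionBy_zmod [NeZero n] (a : ℤ) :
    Nat.card (torsionBy (ZMod n) a) = Int.gcd a n := by
  have hgn : Int.gcd n a ∣ n := Int.natCast_dvd_natCast.1 (Int.gcd_dvd_left ..)
  rw [torsionBy_zmod_eq_zmultiples, card_zmultiples_zmod_natCast (Nat.div_dvd_of_dvd hgn),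
    Nat.div_div_self hgn (NeZero.ne n), Int.gcd_comm]

end ZModSubgroups

section GcdLcm

lemma gcd_lcm_distrib_right (a b n : ℕ) : (a.lcm b).gcd n = (a.gcd n).lcm (b.gcd n) := by
  apply Nat.dvd_antisymm
  · obtain ⟨a', b', hcoprime, ha, hb⟩ := Nat.exists_coprime a b
    generalize a.gcd b = g at ha hb
    subst ha hb
    rw [Nat.lcm_mul_right, hcoprime.lcm_eq_mul]
    set l := ((a' * g).gcd n).lcm ((b' * g).gcd n)
    have hdvd_a : (a' * b' * g).gcd n ∣ a' * l := by
      refine Dvd.dvd.trans ?_ (mul_dvd_mul_left a' (Nat.dvd_lcm_right ((a' * g).gcd n) _))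
      rw [← Nat.gcd_mul_left, mul_assoc]
      exact Nat.gcd_dvd_gcd_of_dvd_right _ (dvd_mul_left n a')
    have hdvd_b : (a' * b' * g).gcd n ∣ b' * l := by
      refine Dvd.dvd.trans ?_ (mul_dvd_mul_left b' (Nat.dvd_lcm_left _ ((b' * g).gcd n)))
      rw [← Nat.gcd_mul_left, mul_comm a' b', mul_assoc]
      exact Nat.gcd_dvd_gcd_of_dvd_right _ (dvd_mul_left n b')
    simpa [Nat.gcd_mul_right, hcoprime.gcd_eq_one] using Nat.dvd_gcd hdvd_a hdvd_b
  · exact Nat.lcm_dvd (Nat.gcd_dvd_gcd_of_dvd_left n (Nat.dvd_lcm_left a b))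
      (Nat.gcd_dvd_gcd_of_dvd_left n (Nat.dvd_lcm_right a b))

/-- The least common multiple of the numbers `gcd(a_j, n)`. By distributivity it is the paper's
`D' = gcd(lcm(a_j), n)`; in this form the sum of the `a_j`-torsion subgroups of `ℤ/n` is visibly
its `D'`-torsion subgroup. -/
def lcmGcd {ι : Type*} [Fintype ι] (n : ℕ) (a : ι → ℤ) : ℕ :=
  Finset.univ.lcm fun j => Int.gcd (a j) n

lemma gcd_lcm_eq_lcmGcd (n : ℕ) (a : Fin 3 → ℤ) :
    Nat.gcd (Int.lcm (a 0) (Int.lcm (a 1) (a 2))) n = lcmGcd n a := by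
  have hlcm : Int.lcm (a 0) (Int.lcm (a 1) (a 2)) =
    Nat.lcm (a 0).natAbs (Nat.lcm (a 1).natAbs (a 2).natAbs) := by simp [Int.lcm]
  have huniv : (Finset.univ : Finset (Fin 3)) = {0, 1, 2} := rfl
  simp only [hlcm, gcd_lcm_distrib_right, lcmGcd, huniv, Finset.lcm_insert, Finset.lcm_singleton,
    normalize_eq]
  rfl

end GcdLcm

section SeifertTuples

open AddSubgroup

variable {ι : Type*} [Fintype ι]

/-- The tuples `(x_j)_j, h` in an abelian group that satisfy the relations `a_j x_j + b_j h = 0` and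
`∑ x_j = 0`, i.e. the homomorphisms from the Seifert group to that group. -/
def seifertTuples (A : Type*) [AddCommGroup A] (a b : ι → ℤ) : AddSubgroup ((ι → A) × A) where
  carrier := {t | (∀ j, a j • t.1 j + b j • t.2 = 0) ∧ ∑ j, t.1 j = 0}
  zero_mem' := by simp
  add_mem' := by
    rintro s t ⟨hs, hs'⟩ ⟨ht, ht'⟩
    refine ⟨fun j => ?_, by simp [Finset.sum_add_distrib, hs', ht']⟩
    simp only [Prod.fst_add, Prod.snd_add, Pi.add_apply, smul_add]
    rw [add_add_add_comm, hs, ht, add_zero]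
  neg_mem' := by
    rintro t ⟨ht, ht'⟩
    refine ⟨fun j => ?_, by simp [ht']⟩
    simp only [Prod.fst_neg, Prod.snd_neg, Pi.neg_apply, smul_neg]
    rw [← neg_add, ht, neg_zero]

lemma mem_seifertTuples {A : Type*} [AddCommGroup A] {a b : ι → ℤ} {t : (ι → A) × A} :
    t ∈ seifertTuples A a b ↔ (∀ j, a j • t.1 j + b j • t.2 = 0) ∧ ∑ j, t.1 j = 0 := Iff.rfl

variable {n : ℕ} {a b c : ι → ℤ}

lemma gcd_dvd_lcmGcd (j : ι) : Int.gcd (a j) n ∣ lcmGcd n a :=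
  Finset.dvd_lcm (f := fun j => Int.gcd (a j) n) (Finset.mem_univ j)

lemma lcmGcd_dvd : lcmGcd n a ∣ n :=
  Finset.lcm_dvd fun _ _ => Int.natCast_dvd_natCast.1 (Int.gcd_dvd_right ..)

lemma map_sum_pi_torsionBy_zmod :
    (AddSubgroup.pi Set.univ fun j => torsionBy (ZMod n) (a j)).map
        (∑ j, Pi.evalAddMonoidHom (fun _ => ZMod n) j) = torsionBy (ZMod n) (lcmGcd n a : ℤ) := by
  simp only [← torsionBy_zmod_gcd (n := n) (a _)]
  exact map_sum_pi_torsionBy fun j => Int.gcd (a j) n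

/-- The paper's `B' = ∑ b_j c'_j D' / gcd(a_j, n)`: multiplying the relations `a_j x_j + b_j h = 0`
by `c'_j D' / gcd(a_j, n)` and summing gives `B' h = 0` in `ℤ/n`. -/
def seifertObstruction (n : ℕ) (a b c : ι → ℤ) : ℤ :=
  ∑ j, b j * c j * ((lcmGcd n a / Int.gcd (a j) n : ℕ) : ℤ)

variable (hc : ∀ j, (c j : ZMod n) * a j = Int.gcd (a j) n)

include hc in
lemma natCast_lcmGcd_eq (j : ι) :
    (lcmGcd n a : ZMod n) = ((lcmGcd n a / Int.gcd (a j) n : ℕ) : ZMod n) * c j * a j := by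
  rw [mul_assoc, hc, ← Nat.cast_mul, Nat.div_mul_cancel (gcd_dvd_lcmGcd j)]

include hc in
lemma seifertObstruction_smul_snd {t : (ι → ZMod n) × ZMod n}
    (ht : t ∈ seifertTuples (ZMod n) a b) : seifertObstruction n a b c • t.2 = 0 := by
  have hrel (j : ι) : ((b j * c j * ((lcmGcd n a / Int.gcd (a j) n : ℕ) : ℤ) : ℤ) : ZMod n) * t.2 =
      -((lcmGcd n a : ZMod n) * t.1 j) := by
    have htj := ht.1 j
    rw [zsmul_eq_mul, zsmul_eq_mul] at htj
    rw [natCast_lcmGcd_eq hc j]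
    simp only [Int.cast_mul, Int.cast_natCast]
    linear_combination ((lcmGcd n a / Int.gcd (a j) n : ℕ) : ZMod n) * c j * htj
  rw [zsmul_eq_mul, seifertObstruction, Int.cast_sum, Finset.sum_mul]
  simp only [hrel, Finset.sum_neg_distrib, ← Finset.mul_sum, ht.2, mul_zero, neg_zero]

include hc in
lemma exists_mem_seifertTuples {m : ZMod n} (hdvd : (lcmGcd n a : ZMod n) ∣ m)
    (hm : seifertObstruction n a b c • m = 0) : ∃ k, (k, m) ∈ seifertTuples (ZMod n) a b := by
  obtain ⟨m, rfl⟩ := hdvd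
  set e : ι → ZMod n := fun j => ((lcmGcd n a / Int.gcd (a j) n : ℕ) : ZMod n) * c j
  obtain ⟨s, hs, hsum⟩ : seifertObstruction n a b c * m ∈
      (AddSubgroup.pi Set.univ fun j => torsionBy (ZMod n) (a j)).map
        (∑ j, Pi.evalAddMonoidHom (fun _ => ZMod n) j) := by
    rw [map_sum_pi_torsionBy_zmod]
    change (lcmGcd n a : ℤ) • ((seifertObstruction n a b c : ZMod n) * m) = 0
    rw [← hm, zsmul_eq_mul, zsmul_eq_mul, Int.cast_natCast]
    ring
  refine ⟨fun j => s j - b j * e j * m, fun j => ?_, ?_⟩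
  · have hsj : a j • s j = 0 := hs j trivial
    rw [zsmul_eq_mul] at hsj
    simp only [zsmul_eq_mul]
    rw [natCast_lcmGcd_eq hc j]
    linear_combination hsj
  · simp only [AddMonoidHom.finsetSum_apply, Pi.evalAddMonoidHom_apply] at hsum
    rw [Finset.sum_sub_distrib, hsum, ← Finset.sum_mul, seifertObstruction, Int.cast_sum, ← sub_mul,
      ← Finset.sum_sub_distrib]
    refine mul_eq_zero_of_left (Finset.sum_eq_zero fun j _ => ?_) m
    simp only [Int.cast_mul, Int.cast_natCast, e]
    ring

variable [NeZero n]

lemma lcmGcd_pos : 0 < lcmGcd n a := Nat.pos_of_dvd_of_pos lcmGcd_dvd (NeZero.pos n)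

lemma card_seifertTuples_snd_eq_zero (a b : ι → ℤ) :
    Nat.card {t : seifertTuples (ZMod n) a b // t.1.2 = 0} =
      (∏ j, Int.gcd (a j) n) / lcmGcd n a := by
  have hcard := card_pi_inf_ker_mul_card_map (fun j => torsionBy (ZMod n) (a j))
    (∑ j, Pi.evalAddMonoidHom (fun _ => ZMod n) j)
  rw [map_sum_pi_torsionBy_zmod, card_torsionBy_zmod, Int.gcd_natCast_natCast,
    Nat.gcd_eq_left lcmGcd_dvd] at hcard
  simp only [card_torsionBy_zmod] at hcard
  rw [← hcard, Nat.mul_div_cancel _ lcmGcd_pos]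
  refine Nat.card_congr
    { toFun := fun t => ⟨t.1.1.1, fun j => ?_, ?_⟩
      invFun := fun u => ⟨⟨(u.1, 0), ?_⟩, rfl⟩
      left_inv := fun t => Subtype.ext (Subtype.ext (Prod.ext rfl t.2.symm)) }
  · change a j • t.1.1.1 j = 0
    simpa [t.2] using t.1.2.1 j
  · simpa [AddMonoidHom.finsetSum_apply] using t.1.2.2
  · obtain ⟨u, hu, hsum⟩ := u
    rw [AddMonoidHom.finsetSum_apply] at hsum
    refine ⟨fun j => ?_, hsum⟩
    change a j • u j + b j • 0 = 0
    rw [smul_zero, add_zero]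
    exact hu j

variable (hab : ∀ j, Int.gcd (a j) (b j) = 1)

include hab in
lemma lcmGcd_dvd_snd_of_mem_seifertTuples {t : (ι → ZMod n) × ZMod n}
    (ht : t ∈ seifertTuples (ZMod n) a b) : (lcmGcd n a : ZMod n) ∣ t.2 := by
  rw [natCast_dvd_zmod_iff lcmGcd_dvd]
  refine Finset.lcm_dvd fun j _ => ?_
  have hdvd_a : (Int.gcd (a j) n : ℤ) ∣ a j := Int.gcd_dvd_left ..
  have hdvd_sum : (n : ℤ) ∣ a j * (t.1 j).val + b j * t.2.val := by
    rw [← ZMod.intCast_zmod_eq_zero_iff_dvd]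
    simpa using ht.1 j
  have hdvd : (Int.gcd (a j) n : ℤ) ∣ b j * t.2.val :=
    (dvd_add_right (hdvd_a.mul_right _)).1 ((Int.gcd_dvd_right ..).trans hdvd_sum)
  have hcoprime : IsCoprime (Int.gcd (a j) n : ℤ) (b j) :=
    (Int.isCoprime_iff_gcd_eq_one.2 (hab j)).of_isCoprime_of_dvd_left hdvd_a
  exact Int.natCast_dvd_natCast.1 (hcoprime.dvd_of_dvd_mul_left hdvd)

include hc hab in
lemma map_snd_seifertTuples :
    (seifertTuples (ZMod n) a b).map (AddMonoidHom.snd _ _) =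
      zmultiples (lcmGcd n a : ZMod n) ⊓ torsionBy (ZMod n) (seifertObstruction n a b c) := by
  ext m
  rw [mem_inf, mem_zmultiples_zmod_iff_dvd]
  constructor
  · rintro ⟨t, ht, rfl⟩
    exact ⟨lcmGcd_dvd_snd_of_mem_seifertTuples hab ht, seifertObstruction_smul_snd hc ht⟩
  · rintro ⟨hdvd, hm⟩
    obtain ⟨k, hk⟩ := exists_mem_seifertTuples hc hdvd hm
    exact ⟨(k, m), hk, rfl⟩

include hc hab in
lemma card_seifertTuples :
    Nat.card (seifertTuples (ZMod n) a b) =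
      n / (lcmGcd n a).lcm (n / Int.gcd n (seifertObstruction n a b c)) *
        ((∏ j, Int.gcd (a j) n) / lcmGcd n a) := by
  have hdvd : n / Int.gcd n (seifertObstruction n a b c) ∣ n :=
    Nat.div_dvd_of_dvd (Int.natCast_dvd_natCast.1 (Int.gcd_dvd_left ..))
  rw [← card_ker_addSubgroupOf_mul_card_map (AddMonoidHom.snd _ _), mul_comm,
    map_snd_seifertTuples hc hab, torsionBy_zmod_eq_zmultiples,
    zmultiples_zmod_natCast_inf lcmGcd_dvd hdvd,
    card_zmultiples_zmod_natCast (Nat.lcm_dvd lcmGcd_dvd hdvd)]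
  exact congrArg _ (card_seifertTuples_snd_eq_zero a b)

end SeifertTuples

section SeifertTuplesFinThree

open AddSubgroup

variable {A : Type*} [AddCommGroup A]

lemma sum_fin_three_cyclic (k : Fin 3 → A) (j : Fin 3) :
    ∑ i, k i = k j + k (j + 1) + k (j - 1) := by
  rw [Fin.sum_univ_three]
  fin_cases j
  · rfl
  · change _ = k 1 + k 2 + k 0
    abel
  · change _ = k 2 + k 0 + k 1
    abel

lemma mem_seifertTuples_single_sub_single {a b : Fin 3 → ℤ} (j : Fin 3) {x : A}
    (hx : a (j + 1) • x = 0) (hx' : a (j - 1) • x = 0) :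
    (Pi.single (j + 1) x - Pi.single (j - 1) x, 0) ∈ seifertTuples A a b := by
  refine mem_seifertTuples.2 ⟨fun i => ?_, by simp⟩
  simp only [Pi.sub_apply, Pi.single_apply, smul_sub, smul_ite, smul_zero, add_zero]
  split_ifs with h h' h' <;> simp [*]

lemma card_seifertTuples_snd_eq_zero_and_fst_eq_zero (a b : Fin 3 → ℤ) (j : Fin 3) :
    Nat.card {t : seifertTuples A a b // t.1.2 = 0 ∧ t.1.1 j = 0} =
      Nat.card (torsionBy A (Int.gcd (a (j + 1)) (a (j - 1)) : ℤ)) := by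
  have hcases (i : Fin 3) : i = j ∨ i = j + 1 ∨ i = j - 1 := by decide +revert
  obtain ⟨hj, hj', hne⟩ : j ≠ j + 1 ∧ j ≠ j - 1 ∧ j + 1 ≠ j - 1 := by decide +revert
  rw [torsionBy_gcd]
  refine (Nat.card_congr (Equiv.ofBijective (fun x =>
    ⟨⟨_, mem_seifertTuples_single_sub_single j x.2.1 x.2.2⟩, rfl,
      by simp [hj, hj']⟩) ⟨?_, ?_⟩)).symm
  · intro x y hxy
    have hcoord := congrArg (fun t => t.1.1.1 (j + 1)) hxy
    simpa [hne] using hcoord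
  · rintro ⟨⟨⟨k, m⟩, hrel, hsum⟩, rfl : m = 0, hkj : k j = 0⟩
    rw [sum_fin_three_cyclic k j, hkj, zero_add, add_eq_zero_iff_eq_neg'] at hsum
    simp only [smul_zero, add_zero] at hrel hsum
    refine ⟨⟨k (j + 1), hrel _, ?_⟩, ?_⟩
    · simpa [hsum] using hrel (j - 1)
    · ext i
      · obtain rfl | rfl | rfl := hcases i
        · simp [hj, hj', hkj]
        · simp [hne]
        · simp [hne.symm, hsum]
      · rfl

end SeifertTuplesFinThree

section SeifertHoms

variable {G H : Type*} [Group G] [Group H] {a b : Fin 3 → ℤ}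

/-- The elements `x₁, x₂, x₃, y` of a group satisfy the defining relations of the Seifert group,
with `y` in the role of the fibre `h`. -/
structure IsSeifertTuple_s14 (a b : Fin 3 → ℤ) (x : Fin 3 → G) (y : G) : Prop where
  commute (j : Fin 3) : Commute (x j) y
  zpow_mul_zpow (j : Fin 3) : x j ^ a j * y ^ b j = 1
  prod : x 0 * x 1 * x 2 = 1

lemma IsSeifertTuple_s14.map (f : G →* H) {x : Fin 3 → G} {y : G} (hxy : IsSeifertTuple_s14 a b x y) :
    IsSeifertTuple_s14 a b (fun j => f (x j)) (f y) where
  commute j := (hxy.commute j).map f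
  zpow_mul_zpow j := by simpa using congrArg f (hxy.zpow_mul_zpow j)
  prod := by simpa using congrArg f hxy.prod

lemma isSeifertTuple_ofAdd_iff {A : Type*} [AddCommGroup A] {k : Fin 3 → A} {m : A} :
    IsSeifertTuple_s14 a b (fun j => ofAdd (k j)) (ofAdd m) ↔ (k, m) ∈ seifertTuples A a b := by
  simp only [mem_seifertTuples, Fin.sum_univ_three, ← ofAdd_eq_one, ofAdd_add, ofAdd_zsmul]
  exact ⟨fun h => ⟨h.zpow_mul_zpow, h.prod⟩, fun h => ⟨fun _ => Commute.all _ _, h.1, h.2⟩⟩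

lemma lift_seifertRels_eq_one_iff {f : Fin 4 → G} :
    (∀ w ∈ seifertRels a b, FreeGroup.lift f w = 1) ↔
      IsSeifertTuple_s14 a b (fun j => f j.castSucc) (f 3) := by
  simp only [seifertRels, Set.union_singleton, Set.forall_mem_insert, Set.mem_union, Set.mem_iUnion,
    Set.mem_singleton_iff, or_imp, forall_and, forall_exists_index, forall_comm (α := FreeGroup _),
    forall_eq]
  simp only [map_mul, map_zpow, map_inv, FreeGroup.lift_apply_of, mul_inv_eq_iff_eq_mul,
    one_mul]
  exact ⟨fun ⟨hprod, hcommute, hzpow⟩ => ⟨hcommute, hzpow, hprod⟩,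
    fun h => ⟨h.prod, h.commute, h.zpow_mul_zpow⟩⟩

/-- The universal property of a presented group, as a bijection. -/
def presentedGroupHomEquiv {α : Type*} (rels : Set (FreeGroup α)) :
    (PresentedGroup rels →* G) ≃ {f : α → G // ∀ w ∈ rels, FreeGroup.lift f w = 1} where
  toFun φ := ⟨fun i => φ (.of i), fun w hw => by
    have hlift : FreeGroup.lift (fun i => φ (.of i)) = φ.comp (PresentedGroup.mk rels) := by
      ext i
      simp [PresentedGroup.of]
    rw [hlift, MonoidHom.comp_apply, PresentedGroup.one_of_mem hw, map_one]⟩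
  invFun f := PresentedGroup.toGroup f.2
  left_inv φ := PresentedGroup.ext fun i => by simp
  right_inv f := by
    ext i
    simp

/-- Homomorphisms from the Seifert group, as the images of `x₁, x₂, x₃` and `h`. -/
def seifertHomEquiv (G : Type*) [Group G] (a b : Fin 3 → ℤ) :
    (PresentedGroup (seifertRels a b) →* G) ≃
      {t : (Fin 3 → G) × G // IsSeifertTuple_s14 a b t.1 t.2} :=
  (presentedGroupHomEquiv _).trans <|
    ((Fin.snocEquiv fun _ => G).symm.trans (Equiv.prodComm _ _)).subtypeEquiv fun _ =>
      lift_seifertRels_eq_one_iff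

end SeifertHoms

section GeometricSum

variable {F : Type*} [Field F]

open Classical in
/-- The geometric sum `1 + x + ⋯ + x ^ (a - 1)`, continued to negative `a` by the recursion
`zgeomSum_add_one`. It is the coefficient in the `a`-th power of an element of `F ⋊ K`. -/
noncomputable def zgeomSum (x : Fˣ) (a : ℤ) : F :=
  if x = 1 then (a : F) else (((x ^ a : Fˣ) : F) - 1) / (x - 1)

lemma zgeomSum_one (a : ℤ) : zgeomSum (1 : Fˣ) a = (a : F) := if_pos rfl

lemma zgeomSum_zero (x : Fˣ) : zgeomSum x 0 = (0 : F) := by simp [zgeomSum]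

lemma zgeomSum_eq_zero {x : Fˣ} {a : ℤ} (hx : x ≠ 1) (hxa : x ^ a = 1) :
    zgeomSum x a = (0 : F) := by simp [zgeomSum, hx, hxa]

lemma val_sub_one_ne_zero {x : Fˣ} (hx : x ≠ 1) : (x : F) - 1 ≠ 0 := by
  rwa [sub_ne_zero, ne_eq, Units.val_eq_one]

lemma zgeomSum_mul_sub_one (x : Fˣ) (a : ℤ) :
    zgeomSum x a * ((x : F) - 1) = ((x ^ a : Fˣ) : F) - 1 := by
  rcases eq_or_ne x 1 with rfl | hx
  · simp
  · rw [zgeomSum, if_neg hx, div_mul_cancel₀ _ (val_sub_one_ne_zero hx)]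

lemma zgeomSum_add_one (x : Fˣ) (a : ℤ) :
    zgeomSum x (a + 1) = zgeomSum x a + ((x ^ a : Fˣ) : F) := by
  rcases eq_or_ne x 1 with rfl | hx
  · simp [zgeomSum_one]
  · apply mul_right_cancel₀ (val_sub_one_ne_zero hx)
    rw [add_mul, zgeomSum_mul_sub_one, zgeomSum_mul_sub_one, zpow_add_one, Units.val_mul]
    ring

end GeometricSum

section SemidirectProduct

variable {F K : Type*} [Field F] [Group K] {ψ : K →* MulAut (Multiplicative F)} {ρ : K →* Fˣ}

/-- The pairs `(u, w)` for which `(u_j, x_j)_j, (w, y)` satisfy the Seifert relations in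
`F ⋊ Fˣ`, given that `x, y` satisfy them in `Fˣ`. -/
def seifertCocycles (a b : Fin 3 → ℤ) (x : Fin 3 → Fˣ) (y : Fˣ) : Set ((Fin 3 → F) × F) :=
  {v | (∀ j, v.1 j + x j * v.2 = v.2 + y * v.1 j) ∧
    (∀ j, zgeomSum (x j) (a j) * v.1 j + ((x j ^ a j : Fˣ) : F) * (zgeomSum y (b j) * v.2) = 0) ∧
    v.1 0 + x 0 * v.1 1 + x 0 * x 1 * v.1 2 = 0}

variable (hρ : ∀ k (x : F), ψ k (ofAdd x) = ofAdd ((ρ k : F) * x))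

include hρ

lemma toAdd_left_mul (g g' : Multiplicative F ⋊[ψ] K) :
    toAdd (g * g').left = toAdd g.left + ρ g.right * toAdd g'.left := by
  rw [SemidirectProduct.mul_left, toAdd_mul, ← ofAdd_toAdd g'.left, hρ]
  rfl

lemma toAdd_left_zpow (g : Multiplicative F ⋊[ψ] K) (a : ℤ) :
    toAdd (g ^ a).left = zgeomSum (ρ g.right) a * toAdd g.left := by
  have hright (a : ℤ) : (g ^ a).right = g.right ^ a := map_zpow SemidirectProduct.rightHom g a
  induction a using Int.induction_on with
  | zero => simp [zgeomSum_zero]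
  | succ i ih =>
    rw [zpow_add_one, toAdd_left_mul hρ, ih, hright, map_zpow, zgeomSum_add_one, add_mul]
  | pred i ih =>
    have hmul := toAdd_left_mul hρ (g ^ (-(i : ℤ) - 1)) g
    have hgeom := zgeomSum_add_one (ρ g.right) (-(i : ℤ) - 1)
    rw [← zpow_add_one, sub_add_cancel, ih, hright, map_zpow] at hmul
    rw [sub_add_cancel] at hgeom
    linear_combination -hmul + toAdd g.left * hgeom

lemma isSeifertTuple_semidirectProduct_iff {a b : Fin 3 → ℤ}
    {x : Fin 3 → Multiplicative F ⋊[ψ] K} {y : Multiplicative F ⋊[ψ] K} :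
    IsSeifertTuple_s14 a b x y ↔ IsSeifertTuple_s14 a b (fun j => (x j).right) y.right ∧
      ((fun j => toAdd (x j).left), toAdd y.left) ∈
        seifertCocycles a b (fun j => ρ (x j).right) (ρ y.right) := by
  have hright (g : Multiplicative F ⋊[ψ] K) (a : ℤ) : (g ^ a).right = g.right ^ a :=
    map_zpow SemidirectProduct.rightHom g a
  have hext (g g' : Multiplicative F ⋊[ψ] K) :
      g = g' ↔ toAdd g.left = toAdd g'.left ∧ g.right = g'.right := SemidirectProduct.ext_iff
  constructor
  · intro h
    refine ⟨h.map SemidirectProduct.rightHom, fun j => ?_, fun j => ?_, ?_⟩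
    · simpa only [toAdd_left_mul hρ] using ((hext _ _).1 (h.commute j)).1
    · simpa [-SemidirectProduct.mul_left, toAdd_left_mul hρ, toAdd_left_zpow hρ, hright] using
        ((hext _ _).1 (h.zpow_mul_zpow j)).1
    · simpa [-SemidirectProduct.mul_left, toAdd_left_mul hρ] using ((hext _ _).1 h.prod).1
  · rintro ⟨hK, hcomm, hzpow, hprod⟩
    refine ⟨fun j => (hext _ _).2 ⟨?_, hK.commute j⟩, fun j => (hext _ _).2 ⟨?_, ?_⟩,
      (hext _ _).2 ⟨?_, hK.prod⟩⟩
    · simpa only [toAdd_left_mul hρ] using hcomm j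
    · simpa [-SemidirectProduct.mul_left, toAdd_left_mul hρ, toAdd_left_zpow hρ, hright] using
        hzpow j
    · simpa [hright] using hK.zpow_mul_zpow j
    · simpa [-SemidirectProduct.mul_left, toAdd_left_mul hρ] using hprod

end SemidirectProduct

section HomCount

variable {F A : Type*} [Field F] [AddCommGroup A]
  {ψ : Multiplicative A →* MulAut (Multiplicative F)} {ρ : Multiplicative A →* Fˣ}

/-- A homomorphism to `F ⋊ A` is a homomorphism to `A` together with a cocycle over it. -/
def seifertSemidirectHomEquiv (hρ : ∀ k (x : F), ψ k (ofAdd x) = ofAdd ((ρ k : F) * x))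
    (a b : Fin 3 → ℤ) :
    (PresentedGroup (seifertRels a b) →* Multiplicative F ⋊[ψ] Multiplicative A) ≃
      Σ t : seifertTuples A a b,
        seifertCocycles a b (fun j => ρ (ofAdd (t.1.1 j))) (ρ (ofAdd t.1.2)) :=
  (seifertHomEquiv _ a b).trans
    { toFun t :=
        have h := (isSeifertTuple_semidirectProduct_iff hρ).1 t.2
        ⟨⟨((fun j => toAdd (t.1.1 j).right), toAdd t.1.2.right),
          isSeifertTuple_ofAdd_iff.1 h.1⟩, _, h.2⟩
      invFun s := ⟨((fun j => ⟨ofAdd (s.2.1.1 j), ofAdd (s.1.1.1 j)⟩),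
          ⟨ofAdd s.2.1.2, ofAdd s.1.1.2⟩),
        (isSeifertTuple_semidirectProduct_iff hρ).2 ⟨isSeifertTuple_ofAdd_iff.2 s.1.2, s.2.2⟩⟩
      left_inv _ := rfl
      right_inv _ := rfl }

lemma exists_injective_hom_units {n : ℕ} [NeZero n] {r : Fˣ} (hr : orderOf r = n)
    {ψ : Multiplicative (ZMod n) →* MulAut (Multiplicative F)}
    (hψ : ∀ x : F, ψ (ofAdd 1) (ofAdd x) = ofAdd ((r : F) * x)) :
    ∃ ρ : Multiplicative (ZMod n) →* Fˣ, Function.Injective ρ ∧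
      ∀ k (x : F), ψ k (ofAdd x) = ofAdd ((ρ k : F) * x) := by
  have hpow (m : ℕ) (x : F) : ψ (ofAdd 1 ^ m) (ofAdd x) = ofAdd (((r ^ m : Fˣ) : F) * x) := by
    induction m with
    | zero => simp
    | succ m ih =>
      rw [pow_succ', map_mul, MulAut.mul_apply, ih, hψ, pow_succ', Units.val_mul, mul_assoc]
  let e := zmodMulEquivOfGenerator (g := (⟨r, Subgroup.mem_zpowers r⟩ : Subgroup.zpowers r))
    (fun ⟨_, k, hk⟩ => ⟨k, Subtype.ext hk⟩) (hr ▸ Nat.card_zpowers r)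
  refine ⟨(Subgroup.zpowers r).subtype.comp e.toMonoidHom,
    Subtype.val_injective.comp e.injective, fun k x => ?_⟩
  obtain ⟨m, rfl⟩ : ∃ m : ℕ, ofAdd (1 : ZMod n) ^ m = k :=
    ⟨(toAdd k).val, by simp [← ofAdd_nsmul]⟩
  rw [hpow]
  simp [e, zmodMulEquivOfGenerator_apply_ofAdd_one]

end HomCount

section CocycleCount

variable {F : Type*} [Field F] {a b : Fin 3 → ℤ} {x : Fin 3 → Fˣ} {y : Fˣ}

/-- Every cocycle is here the coboundary of a unique scalar. -/
lemma card_seifertCocycles_of_ne_one (hxy : IsSeifertTuple_s14 a b x y) (hy : y ≠ 1) :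
    Nat.card (seifertCocycles a b x y) = Nat.card F := by
  have hy' := val_sub_one_ne_zero hy
  symm
  refine Nat.card_congr (Equiv.ofBijective
    (fun t => ⟨(fun j => ((x j : F) - 1) * t, ((y : F) - 1) * t), ?_, ?_, ?_⟩) ⟨?_, ?_⟩)
  · intro j
    ring
  · intro j
    have hj : ((x j ^ a j : Fˣ) : F) * ((y ^ b j : Fˣ) : F) = 1 := by
      rw [← Units.val_mul, hxy.zpow_mul_zpow, Units.val_one]
    linear_combination t * zgeomSum_mul_sub_one (x j) (a j) +
      t * ((x j ^ a j : Fˣ) : F) * zgeomSum_mul_sub_one y (b j) + t * hj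
  · have hprod : (x 0 : F) * x 1 * x 2 = 1 := by
      rw [← Units.val_mul, ← Units.val_mul, hxy.prod, Units.val_one]
    linear_combination t * hprod
  · intro s t hst
    exact mul_left_cancel₀ hy' (congrArg (fun z => z.1.2) hst)
  · rintro ⟨⟨u, w⟩, hcomm, -, -⟩
    refine ⟨w / ((y : F) - 1), Subtype.ext (Prod.ext (funext fun j => ?_) ?_)⟩
    · have hj : u j + x j * w = w + y * u j := hcomm j
      field_simp
      linear_combination hj
    · exact mul_div_cancel₀ _ hy'

lemma card_subtype_mul_eq_zero [DecidableEq F] (d : F) :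
    Nat.card {v : F // d * v = 0} = if d = 0 then Nat.card F else 1 := by
  split_ifs with hd
  · exact Nat.card_congr (Equiv.subtypeUnivEquiv (by simp [hd]))
  · simp [hd]

lemma card_subtype_mul_eq_zero_and_sum_eq_zero_mul [Finite F] {ι : Type*} [Fintype ι]
    (c d : ι → F) {j : ι} (hc : c j ≠ 0) (hd : d j = 0) :
    Nat.card {u : ι → F // (∀ i, d i * u i = 0) ∧ ∑ i, c i * u i = 0} * Nat.card F =
      ∏ i, Nat.card {v : F // d i * v = 0} := by
  classical
  let H (i : ι) : AddSubgroup F := (AddMonoidHom.mulLeft (d i)).ker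
  let f : (ι → F) →+ F := ∑ i, (AddMonoidHom.mulLeft (c i)).comp (Pi.evalAddMonoidHom _ i)
  have hf (u : ι → F) : f u = ∑ i, c i * u i := by simp [f]
  have hmap : (AddSubgroup.pi Set.univ H).map f = ⊤ := by
    refine eq_top_iff.2 fun t _ => ⟨Pi.single j (t / c j), fun i _ => ?_, ?_⟩
    · rcases eq_or_ne i j with rfl | hi
      · simp [H, hd]
      · simp [hi, zero_mem]
    · rw [hf, Finset.sum_eq_single j (fun i _ hi => by simp [hi]) (by simp)]
      simp [mul_div_cancel₀ _ hc]
  have hcard := card_pi_inf_ker_mul_card_map H f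
  rw [hmap, AddSubgroup.card_top] at hcard
  simp only [hf] at hcard
  exact hcard

lemma snd_eq_zero_of_mem_seifertCocycles_one {v : (Fin 3 → F) × F}
    (hv : v ∈ seifertCocycles a b x 1) {j : Fin 3} (ha : zgeomSum (x j) (a j) = (0 : F))
    (hxb : x j ≠ 1 ∨ (b j : F) ≠ 0) : v.2 = 0 := by
  obtain ⟨hcomm, hzpow, -⟩ := hv
  rcases hxb with hx | hb
  · refine (mul_eq_zero.1 ?_).resolve_left (val_sub_one_ne_zero hx)
    have hj := hcomm j
    rw [Units.val_one] at hj
    linear_combination hj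
  · simpa [ha, zgeomSum_one, hb, zpow_ne_zero] using hzpow j

lemma card_seifertCocycles_one_mul [Finite F] {j : Fin 3}
    (ha : zgeomSum (x j) (a j) = (0 : F)) (hxb : x j ≠ 1 ∨ (b j : F) ≠ 0) :
    Nat.card (seifertCocycles a b x 1) * Nat.card F =
      ∏ i, Nat.card {v : F // zgeomSum (x i) (a i) * v = 0} := by
  rw [← card_subtype_mul_eq_zero_and_sum_eq_zero_mul ![1, (x 0 : F), x 0 * x 1] _
    (j := j) (by fin_cases j <;> simp) ha]
  congr 1
  have hsnd (v : seifertCocycles a b x 1) : v.1.2 = 0 :=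
    snd_eq_zero_of_mem_seifertCocycles_one v.2 ha hxb
  have hmem (u : Fin 3 → F) : (u, 0) ∈ seifertCocycles a b x 1 ↔
      (∀ i, zgeomSum (x i) (a i) * u i = 0) ∧ ∑ i, ![1, (x 0 : F), x 0 * x 1] i * u i = 0 := by
    simp [seifertCocycles, Fin.sum_univ_three]
  exact Nat.card_congr
    { toFun v := ⟨v.1.1, (hmem _).1 (hsnd v ▸ v.2)⟩
      invFun u := ⟨(u.1, 0), (hmem _).2 u.2⟩
      left_inv v := Subtype.ext (Prod.ext rfl (hsnd v).symm)
      right_inv _ := rfl }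

lemma card_seifertCocycles_one_one (ha : ∀ j, (a j : F) ≠ 0) :
    Nat.card (seifertCocycles a b (1 : Fin 3 → Fˣ) 1) =
      Nat.card {w : F // (∑ j, (a j : F)⁻¹ * b j) * w = 0} := by
  have hmem (u : Fin 3 → F) (w : F) : (u, w) ∈ seifertCocycles a b (1 : Fin 3 → Fˣ) 1 ↔
      (∀ j, u j = -((a j : F)⁻¹ * b j) * w) ∧ ∑ j, u j = 0 := by
    have hsolve (j : Fin 3) :
        a j * u j + b j * w = 0 ↔ u j = -((a j : F)⁻¹ * b j) * w := by
      rw [add_eq_zero_iff_eq_neg, ← eq_inv_mul_iff_mul_eq₀ (ha j)]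
      ring_nf
    simp [seifertCocycles, zgeomSum_one, hsolve, Fin.sum_univ_three, add_comm]
  refine Nat.card_congr
    { toFun v := ⟨v.1.2, ?_⟩
      invFun w := ⟨(fun j => -((a j : F)⁻¹ * b j) * w, w), (hmem _ _).2 ⟨fun _ => rfl, ?_⟩⟩
      left_inv v := Subtype.ext (Prod.ext (funext fun j => (((hmem _ _).1 v.2).1 j).symm) rfl)
      right_inv _ := rfl }
  · obtain ⟨hu, hsum⟩ := (hmem _ _).1 v.2
    simpa [hu, ← Finset.sum_mul] using hsum
  · simpa [← Finset.sum_mul] using w.2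

end CocycleCount

section FibreSum

variable {F : Type*} [Field F] [Finite F] {a b : Fin 3 → ℤ} {q C : ℤ} {g : Fin 3 → ℤ}

lemma card_seifertCocycles_one_of_ne_one [DecidableEq F] {x : Fin 3 → Fˣ}
    (hq : (Nat.card F : ℤ) = q)
    (hg : ∀ j, (Nat.card {v : F // (a j : F) * v = 0} : ℤ) = g j)
    (hx : IsSeifertTuple_s14 a b x 1) (hx1 : x ≠ 1) :
    (Nat.card (seifertCocycles a b x 1) : ℤ) =
      q ^ 2 + ∑ j, if x j = 1 then g j * q - q ^ 2 else 0 := by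
  have hgeom {i : Fin 3} (hi : x i ≠ 1) : zgeomSum (x i) (a i) = (0 : F) :=
    zgeomSum_eq_zero hi (by simpa using hx.zpow_mul_zpow i)
  have hfactor (i : Fin 3) :
      (Nat.card {v : F // zgeomSum (x i) (a i) * v = 0} : ℤ) = if x i = 1 then g i else q := by
    split_ifs with hi
    · rw [hi, zgeomSum_one, hg]
    · rw [card_subtype_mul_eq_zero, if_pos (hgeom hi), hq]
  obtain ⟨j, hj⟩ := Function.ne_iff.1 hx1
  have hcard := congrArg (Nat.cast : ℕ → ℤ)
    (card_seifertCocycles_one_mul (b := b) (hgeom hj) (.inl hj))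
  push_cast [hfactor, hq] at hcard
  have hq0 : q ≠ 0 := hq ▸ Nat.cast_ne_zero.2 Nat.card_pos.ne'
  apply mul_right_cancel₀ hq0
  rw [hcard]
  have hprod := hx.prod
  have hne : ¬ (x 0 = 1 ∧ x 1 = 1 ∧ x 2 = 1) := fun ⟨h0, h1, h2⟩ =>
    hx1 (funext (Fin.forall_fin_succ.2 ⟨h0, Fin.forall_fin_two.2 ⟨h1, h2⟩⟩))
  rw [Fin.prod_univ_three, Fin.sum_univ_three]
  -- as `x 0 * x 1 * x 2 = 1`, at most one of the `x j` is `1`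
  by_cases h0 : x 0 = 1 <;> by_cases h1 : x 1 = 1 <;> by_cases h2 : x 2 = 1 <;>
    simp only [h0, h1, h2, if_true, if_false] <;>
    first
    | ring1
    | (simp [h0, h1, h2] at hprod hne)

lemma card_seifertCocycles_eq [DecidableEq F] {x : Fin 3 → Fˣ} {y : Fˣ}
    (hq : (Nat.card F : ℤ) = q)
    (hg : ∀ j, (Nat.card {v : F // (a j : F) * v = 0} : ℤ) = g j)
    (hC : (Nat.card (seifertCocycles a b (1 : Fin 3 → Fˣ) 1) : ℤ) = C)
    (hxy : IsSeifertTuple_s14 a b x y) :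
    (Nat.card (seifertCocycles a b x y) : ℤ) = q + (if y = 1 then q ^ 2 - q else 0) +
      (∑ j, if y = 1 ∧ x j = 1 then g j * q - q ^ 2 else 0) +
      if y = 1 ∧ x = 1 then C - q ^ 2 - ∑ j, (g j * q - q ^ 2) else 0 := by
  rcases eq_or_ne y 1 with rfl | hy
  · rcases eq_or_ne x 1 with rfl | hx
    · rw [hC]
      simp
    · rw [card_seifertCocycles_one_of_ne_one hq hg hxy hx]
      simp [hx]
  · simp [card_seifertCocycles_of_ne_one hxy hy, hq, hy]

lemma sum_ite_const_eq_card_mul {α : Type*} [Fintype α] (P : α → Prop) [DecidablePred P] (z : ℤ) :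
    (∑ t, if P t then z else 0) = Nat.card {t // P t} * z := by
  rw [← Finset.sum_filter, Finset.sum_const, nsmul_eq_mul, Nat.card_eq_fintype_card,
    Fintype.card_subtype]

lemma card_seifertHom_semidirectProduct {A : Type*} [AddCommGroup A] [Finite A]
    {ψ : Multiplicative A →* MulAut (Multiplicative F)} {ρ : Multiplicative A →* Fˣ}
    (hρ : ∀ k (x : F), ψ k (ofAdd x) = ofAdd ((ρ k : F) * x)) (hinj : Function.Injective ρ)
    (hq : (Nat.card F : ℤ) = q)
    (hg : ∀ j, (Nat.card {v : F // (a j : F) * v = 0} : ℤ) = g j)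
    (hC : (Nat.card (seifertCocycles a b (1 : Fin 3 → Fˣ) 1) : ℤ) = C) :
    (Nat.card (PresentedGroup (seifertRels a b) →* Multiplicative F ⋊[ψ] Multiplicative A) : ℤ) =
      Nat.card (seifertTuples A a b) * q +
      Nat.card {t : seifertTuples A a b // t.1.2 = 0} * (q ^ 2 - q) +
      (∑ j, Nat.card (AddSubgroup.torsionBy A (Int.gcd (a (j + 1)) (a (j - 1)) : ℤ)) *
        (g j * q - q ^ 2)) +
      (C - q ^ 2 - ∑ j, (g j * q - q ^ 2)) := by
  classical
  let _ := Fintype.ofFinite (seifertTuples A a b)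
  have hρ_one (m : A) : ρ (ofAdd m) = 1 ↔ m = 0 := by
    rw [map_eq_one_iff ρ hinj, ofAdd_eq_one]
  have hfibre (t : seifertTuples A a b) :=
    card_seifertCocycles_eq hq hg hC ((isSeifertTuple_ofAdd_iff.2 t.2).map ρ)
  have hzero (t : seifertTuples A a b) :
      (t.1.2 = 0 ∧ (fun j => ρ (ofAdd (t.1.1 j))) = 1) ↔ t = 0 := by
    rw [Subtype.ext_iff, Prod.ext_iff, and_comm]
    simp [hρ_one, funext_iff]
  rw [Nat.card_congr (seifertSemidirectHomEquiv hρ a b), Nat.card_sigma, Nat.cast_sum,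
    Finset.sum_congr rfl fun t _ => hfibre t]
  simp only [hρ_one, hzero, Finset.sum_add_distrib, Finset.sum_const, Finset.card_univ,
    nsmul_eq_mul]
  rw [Finset.sum_comm]
  simp only [sum_ite_const_eq_card_mul, card_seifertTuples_snd_eq_zero_and_fst_eq_zero,
    ← Nat.card_eq_fintype_card, Nat.card_unique, Nat.cast_one, one_mul]

end FibreSum

section PrimeField

variable {F : Type*} [Field F] {p h : ℕ} [CharP F p] {a b : Fin 3 → ℤ}

lemma card_subtype_intCast_mul_eq_zero (hp : p.Prime) (hF : Nat.card F = p ^ h) (m : ℤ) :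
    Nat.card {v : F // (m : F) * v = 0} = Int.gcd m p ^ h := by
  classical
  simp only [card_subtype_mul_eq_zero, CharP.intCast_eq_zero_iff F p]
  split_ifs with hm
  · rw [hF, Int.gcd_eq_natAbs_right hm, Int.natAbs_natCast]
  · rw [Int.gcd_comm, Int.isCoprime_iff_gcd_eq_one.1, one_pow]
    exact (Nat.prime_iff_prime_int.1 hp).coprime_iff_not_dvd.2 hm

lemma card_seifertCocycles_one_one_mul_of_dvd [Finite F] (hp : p.Prime)
    (hab : ∀ j, Int.gcd (a j) (b j) = 1) (hdvd : ∃ j, (p : ℤ) ∣ a j) :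
    Nat.card (seifertCocycles a b (1 : Fin 3 → Fˣ) 1) * Nat.card F =
      ∏ j, Nat.card {v : F // (a j : F) * v = 0} := by
  obtain ⟨j, hj⟩ := hdvd
  have haj : (a j : F) = 0 := (CharP.intCast_eq_zero_iff F p _).2 hj
  have hbj : (b j : F) ≠ 0 := fun hb =>
    (Nat.prime_iff_prime_int.1 hp).not_isUnit <|
      (Int.isCoprime_iff_gcd_eq_one.2 (hab j)).isUnit_of_dvd' hj
        ((CharP.intCast_eq_zero_iff F p _).1 hb)
  simpa only [Pi.one_apply, zgeomSum_one] using
    card_seifertCocycles_one_mul (x := (1 : Fin 3 → Fˣ)) (j := j)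
      (by rw [Pi.one_apply, zgeomSum_one, haj]) (.inr hbj)

lemma sum_inv_mul_intCast_eq_zero_iff [Fact p.Prime] :
    ∑ j, (a j : F)⁻¹ * (b j : F) = 0 ↔ ∑ j, (a j : ZMod p)⁻¹ * (b j : ZMod p) = 0 := by
  rw [← map_eq_zero (ZMod.castHom dvd_rfl F)]
  simp only [map_sum, map_mul, map_inv₀, map_intCast]

lemma card_seifertCocycles_one_one_eq [Finite F] [Fact p.Prime] (hF : Nat.card F = p ^ h)
    (hab : ∀ j, Int.gcd (a j) (b j) = 1) :
    (Nat.card (seifertCocycles a b (1 : Fin 3 → Fˣ) 1) : ℤ) =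
      if (p : ℤ) ∣ ∏ j, a j then (∏ j, (Int.gcd (a j) p : ℤ) ^ h) / (p : ℤ) ^ h
      else if ∑ j, (a j : ZMod p)⁻¹ * (b j : ZMod p) = 0 then (p : ℤ) ^ h else 1 := by
  classical
  have hp : p.Prime := Fact.out
  simp only [(Nat.prime_iff_prime_int.1 hp).dvd_finsetProd_iff, Finset.mem_univ, true_and]
  split_ifs with hdvd hsum
  · have hcard := congrArg (Nat.cast : ℕ → ℤ)
      (card_seifertCocycles_one_one_mul_of_dvd (F := F) hp hab hdvd)
    push_cast [card_subtype_intCast_mul_eq_zero hp hF, hF] at hcard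
    rw [← hcard, Int.mul_ediv_cancel _ (pow_ne_zero _ (mod_cast hp.ne_zero))]
  all_goals
    have ha (j : Fin 3) : (a j : F) ≠ 0 := fun haj =>
      hdvd ⟨j, (CharP.intCast_eq_zero_iff F p _).1 haj⟩
    rw [card_seifertCocycles_one_one ha, card_subtype_mul_eq_zero,
      if_congr (sum_inv_mul_intCast_eq_zero_iff (p := p)) rfl rfl]
  · rw [if_pos hsum, hF, Nat.cast_pow]
  · rw [if_neg hsum, Nat.cast_one]

end PrimeField

/-- Theorem 3.3 of the paper.  Counting homomorphisms from the
fundamental group of the small Seifert manifold `S²(a₁/b₁, a₂/b₂, a₃/b₃)` to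
`G = F_{p^h} ⋊_r ℤ/nℤ`:  with `D' = gcd(lcm(a₁,a₂,a₃), n)`, `c'_j·a_j ≡ gcd(a_j,n)
(mod n)`, `B' = Σ b_j c'_j D'/gcd(a_j,n)`, `E = n/lcm(D', n/gcd(n,B'))`,
`κ₂ = 2 - Σ gcd(a_{j+1},a_{j-1},n) + (Π gcd(a_j,n))/D'`,
`κ̃₁ = Σ (gcd(a_{j+1},a_{j-1},n) - 1)·gcd(a_j,p)^h + (E-1)(Π gcd(a_j,n))/D'`, and
`C = (Π gcd(a_j,p)^h)/p^h` if `p ∣ a₁a₂a₃`, `C = p^h` if `p ∤ a₁a₂a₃` and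
`Σ a_j⁻¹ b_j ≡ 0 (mod p)`, `C = 1` otherwise, the number of homomorphisms equals
`κ₂ p^{2h} + κ̃₁ p^h + C`. -/
theorem card_homs_seifert_to_semidirect_field
    (a b : Fin 3 → ℤ) (ha : ∀ j, a j ≠ 0) (hab : ∀ j, Int.gcd (a j) (b j) = 1)
    (p h : ℕ) (hp : p.Prime) (hh : 1 ≤ h)
    (F : Type) [Field F] [Fintype F] (hF : Fintype.card F = p ^ h)
    (n : ℕ) (r : Fˣ) (hr : orderOf r = n)
    (ψ : Multiplicative (ZMod n) →* MulAut (Multiplicative F))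
    (hψ : ∀ x : F, ψ (ofAdd (1 : ZMod n)) (ofAdd x) = ofAdd ((r : F) * x))
    (D' : ℕ) (hD' : D' = Nat.gcd (Int.lcm (a 0) (Int.lcm (a 1) (a 2))) n)
    (c' : Fin 3 → ℤ)
    (hc' : ∀ j, c' j * a j ≡ (Int.gcd (a j) (n : ℤ) : ℤ) [ZMOD (n : ℤ)])
    (B' : ℤ) (hB' : B' = ∑ j : Fin 3, b j * c' j * ((D' / Int.gcd (a j) (n : ℤ) : ℕ) : ℤ))
    (E : ℕ) (hE : E = n / Nat.lcm D' (n / Int.gcd (n : ℤ) B'))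
    (κ₂ : ℤ)
    (hκ₂ : κ₂ = 2 - ∑ j : Fin 3, (Nat.gcd (Int.gcd (a (j + 1)) (a (j - 1))) n : ℤ)
      + (((∏ j : Fin 3, Int.gcd (a j) (n : ℤ)) / D' : ℕ) : ℤ))
    (κ₁' : ℤ)
    (hκ₁' : κ₁' = ∑ j : Fin 3,
        ((Nat.gcd (Int.gcd (a (j + 1)) (a (j - 1))) n : ℤ) - 1) * (Int.gcd (a j) (p : ℤ) : ℤ) ^ h
      + ((E : ℤ) - 1) * (((∏ j : Fin 3, Int.gcd (a j) (n : ℤ)) / D' : ℕ) : ℤ))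
    (C : ℤ)
    (hC : C = if (p : ℤ) ∣ a 0 * a 1 * a 2 then
        (∏ j : Fin 3, (Int.gcd (a j) (p : ℤ) : ℤ) ^ h) / (p : ℤ) ^ h
      else if (∑ j : Fin 3, ((a j : ZMod p)⁻¹ * (b j : ZMod p))) = 0 then (p : ℤ) ^ h
      else 1) :
    (Nat.card (PresentedGroup (seifertRels a b) →*
        (Multiplicative F ⋊[ψ] Multiplicative (ZMod n))) : ℤ)
      = κ₂ * (p : ℤ) ^ (2 * h) + κ₁' * (p : ℤ) ^ h + C := by
  have : NeZero n := ⟨hr ▸ (orderOf_pos r).ne'⟩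
  have : Fact p.Prime := ⟨hp⟩
  have hcard : Nat.card F = p ^ h := Nat.card_eq_fintype_card.trans hF
  have : CharP F p := charP_of_card_eq_prime_pow hF
  obtain ⟨ρ, hinj, hρ⟩ := exists_injective_hom_units hr hψ
  have hc (j : Fin 3) : (c' j : ZMod n) * a j = Int.gcd (a j) n := mod_cast
    (ZMod.intCast_eq_intCast_iff _ _ n).2 (hc' j)
  have htorsion (j : Fin 3) :
      Nat.card (AddSubgroup.torsionBy (ZMod n) (Int.gcd (a (j + 1)) (a (j - 1)) : ℤ)) =
        Nat.gcd (Int.gcd (a (j + 1)) (a (j - 1))) n := by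
    rw [card_torsionBy_zmod, Int.gcd_natCast_natCast]
  have hD : D' = lcmGcd n a := hD'.trans (gcd_lcm_eq_lcmGcd n a)
  have hS : Nat.card (seifertTuples (ZMod n) a b) =
      E * ((∏ j, Int.gcd (a j) n) / D') := by
    rw [card_seifertTuples hc hab, hE, hB', hD, seifertObstruction]
  have hS₀ : Nat.card {t : seifertTuples (ZMod n) a b // t.1.2 = 0} =
      (∏ j, Int.gcd (a j) n) / D' := by
    rw [card_seifertTuples_snd_eq_zero, hD]
  rw [card_seifertHom_semidirectProduct hρ hinj (congrArg Nat.cast hcard)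
    (fun j => congrArg Nat.cast (card_subtype_intCast_mul_eq_zero hp hcard (a j)))
    (card_seifertCocycles_one_one_eq hcard hab), Fin.prod_univ_three a, ← hC, hS, hS₀, hκ₂, hκ₁']
  simp only [htorsion, Fin.sum_univ_three, Nat.cast_mul, Nat.cast_pow]
  ring
end
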